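/- arXiv:1609.05776 — 3 statements merged into one kernel-verified Lean document; each statement's English description precedes it below -/
import Mathlib

section
/- (Dirichlet) Let p be a prime with p ≡ 3 (mod 4). Then the sum of the Legendre symbols (n/p) for n ranging from 1 to (p−1)/2 is strictly positive. -/
/-!
Let `χ` be the Legendre symbol modulo `p`, `S` the sum of `χ n` over `1 ≤ n < p / 2`, and `T` the
sum of `χ a * a` over `0 ≤ a < p`. Replacing each `a` by the residue of `2 * a` gives
`T = χ 2 * (2 * T + p * S)`, so that `T ≤ 0` implies `0 ≤ S`; and `S ≠ 0` because it is a sum of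
an odd number of signs.

The inequality `T ≤ 0` amounts to `0 ≤ L(1, χ)`. On the one hand, the Dirichlet convolution `χ * 1`
is nonnegative, and summing it up to `M!` yields `∑ k ≤ M, χ k / k ≥ -O(1 / M)`. On the other hand,
Abel's theorem and the expansion of `χ` into additive characters give `L(1, χ) * G = -π * I * T / p`
for the Gauss sum `G`, whose exact value `I * √p` is needed here. That value comes from the
Landsberg–Schaar reciprocity law: the functional equation of the theta function exchanges its
asymptotics at the rational cusps `2 / p` and `-p / 2`, which are governed by quadratic Gauss sums
modulo `p` and modulo `2`.
-/

open Filter Finset Topology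
open scoped Real

/-- The filter on `ℂ` generated by the horodiscs `{w | c < Im (-1 / w)}` of the upper half plane
based at the cusp `0`; it is the filter along which theta functions are studied near a cusp. -/
noncomputable def horodiscsAtZero : Filter ℂ :=
  comap (fun w : ℂ ↦ (-1 / w).im) atTop

theorem tendsto_jacobiTheta₂_ofReal (x : ℝ) :
    Tendsto (jacobiTheta₂ x) (comap Complex.im atTop) (𝓝 1) := by
  have term_tendsto (n : ℤ) : Tendsto (fun τ ↦ jacobiTheta₂_term n x τ)
      (comap Complex.im atTop) (𝓝 (if n = 0 then 1 else 0)) := by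
    rcases eq_or_ne n 0 with rfl | hn
    · simpa [jacobiTheta₂_term] using tendsto_const_nhds
    · rw [if_neg hn, tendsto_zero_iff_norm_tendsto_zero]
      simp only [norm_jacobiTheta₂_term, Complex.ofReal_im, mul_zero, sub_zero]
      refine Real.tendsto_exp_atBot.comp (Tendsto.const_mul_atTop_of_neg ?_ tendsto_comap)
      have : (0 : ℝ) < n ^ 2 := by positivity
      nlinarith [Real.pi_pos]
  have term_le : ∀ᶠ τ in comap Complex.im atTop, ∀ n : ℤ,
      ‖jacobiTheta₂_term n x τ‖ ≤ ‖jacobiTheta₂_term n 0 Complex.I‖ := by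
    filter_upwards [tendsto_comap.eventually_ge_atTop 1] with τ hτ n
    simp only [norm_jacobiTheta₂_term, Complex.ofReal_im, Complex.zero_im, Complex.I_im]
    have : -π * n ^ 2 ≤ 0 := by nlinarith [Real.pi_pos, sq_nonneg (n : ℝ)]
    simpa using mul_le_mul_of_nonpos_left hτ this
  have bound_summable : Summable fun n : ℤ ↦ ‖jacobiTheta₂_term n 0 Complex.I‖ :=
    ((summable_jacobiTheta₂_term_iff 0 Complex.I).mpr (by simp)).norm
  rw [← tsum_ite_eq (0 : ℤ) fun _ ↦ (1 : ℂ)]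
  exact tendsto_tsum_of_dominated_convergence bound_summable term_tendsto term_le

/-- The generalized quadratic Gauss sum `∑ exp (π i a r² / q)` over `0 ≤ r < q`. When `a * q` is
even its summand depends only on `r` modulo `q`. -/
noncomputable def quadraticExpSum (a : ℤ) (q : ℕ) : ℂ :=
  ∑ r ∈ range q, Complex.exp (π * Complex.I * (a / q) * r ^ 2)

theorem exp_quadratic_add_mul {a : ℤ} {q : ℕ} [NeZero q] (h : Even (a * q)) (k : ℤ) (r : ℕ) :
    Complex.exp (π * Complex.I * (a / q) * (k * q + r) ^ 2) =
      Complex.exp (π * Complex.I * (a / q) * r ^ 2) := by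
  obtain ⟨c, hc⟩ := h
  have hq : (q : ℂ) ≠ 0 := NeZero.ne _
  have hc' : (a : ℂ) * q = c + c := mod_cast hc
  rw [eq_comm, ← Complex.exp_periodic.int_mul (c * k ^ 2 + a * k * r)]
  congr 1
  push_cast
  field_simp
  linear_combination -(k : ℂ) ^ 2 * q * hc'

theorem sqrt_ofReal_mul {r : ℝ} (hr : 0 ≤ r) (z : ℂ) :
    Complex.sqrt (r * z) = √r * Complex.sqrt z := by
  rcases hr.eq_or_lt with rfl | hr
  · simp
  rcases eq_or_ne z 0 with rfl | hz
  · simp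
  have hr' : (r : ℂ) ≠ 0 := mod_cast hr.ne'
  have sqrt_r : (√r : ℂ) = (r : ℂ) ^ (2⁻¹ : ℂ) := by
    rw [← Complex.sqrt, Complex.sqrt_of_nonneg (mod_cast hr.le), Complex.ofReal_re]
  rw [sqrt_r]
  simp only [Complex.sqrt]
  rw [Complex.cpow_def_of_ne_zero (mul_ne_zero hr' hz), Complex.cpow_def_of_ne_zero hr',
    Complex.cpow_def_of_ne_zero hz, Complex.log_ofReal_mul hr hz,
    Complex.ofReal_log hr.le, add_mul, Complex.exp_add]

theorem sqrt_eq_zero_iff {z : ℂ} : Complex.sqrt z = 0 ↔ z = 0 := by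
  simp [Complex.sqrt, Complex.cpow_eq_zero_iff]

theorem jacobiTheta₂_term_mul_add {a : ℤ} {q : ℕ} [NeZero q] (h : Even (a * q)) (w : ℂ) (k : ℤ)
    (r : ℕ) :
    jacobiTheta₂_term (k * q + r) 0 (a / q + w) =
      Complex.exp (π * Complex.I * (a / q) * r ^ 2) * Complex.exp (π * Complex.I * w * r ^ 2) *
        jacobiTheta₂_term k (q * r * w) (q ^ 2 * w) := by
  rw [← exp_quadratic_add_mul h k r]
  simp only [jacobiTheta₂_term, ← Complex.exp_add]
  congr 1
  push_cast
  ring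

theorem exp_mul_jacobiTheta₂_natCast_mul {q : ℕ} [NeZero q] (r : ℕ) {w : ℂ} (hw : w ≠ 0) :
    Complex.exp (π * Complex.I * w * r ^ 2) * jacobiTheta₂ (q * r * w) (q ^ 2 * w) =
      1 / Complex.sqrt (-Complex.I * (q ^ 2 * w)) * jacobiTheta₂ (r / q) (-1 / (q ^ 2 * w)) := by
  have hq : (q : ℂ) ≠ 0 := NeZero.ne _
  have exp_cancel : Complex.exp (π * Complex.I * w * r ^ 2) *
      Complex.exp (-π * Complex.I * (q * r * w) ^ 2 / (q ^ 2 * w)) = 1 := by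
    rw [← Complex.exp_add, Complex.exp_eq_one_iff]
    exact ⟨0, by field_simp; ring⟩
  have div_cancel : (q * r * w / (q ^ 2 * w) : ℂ) = r / q := by field_simp
  rw [jacobiTheta₂_functional_equation (q * r * w), one_div (2 : ℂ), ← Complex.sqrt, div_cancel]
  linear_combination (1 / Complex.sqrt (-Complex.I * (q ^ 2 * w)) *
    jacobiTheta₂ (r / q) (-1 / (q ^ 2 * w))) * exp_cancel

theorem jacobiTheta₂_zero_add {a : ℤ} {q : ℕ} [NeZero q] (h : Even (a * q)) {w : ℂ}
    (hw : 0 < w.im) :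
    jacobiTheta₂ 0 (a / q + w) = 1 / Complex.sqrt (-Complex.I * (q ^ 2 * w)) *
      ∑ r ∈ range q, Complex.exp (π * Complex.I * (a / q) * r ^ 2) *
        jacobiTheta₂ (r / q) (-1 / (q ^ 2 * w)) := by
  have hw0 : w ≠ 0 := by rintro rfl; simp at hw
  have im_add : 0 < (a / q + w : ℂ).im := by
    simpa [Complex.div_natCast_im] using hw
  have im_mul : 0 < ((q : ℂ) ^ 2 * w).im := by
    rw [← Complex.ofReal_natCast, ← Complex.ofReal_pow, Complex.im_ofReal_mul]
    have : 0 < q := Nat.pos_of_neZero q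
    positivity
  have sum_residues := ((((Int.divModEquiv q).trans (Equiv.prodComm _ _)).symm.hasSum_iff.mpr
    (hasSum_jacobiTheta₂_term 0 im_add)).prod_fiberwise fun r ↦ by
      simpa [jacobiTheta₂_term_mul_add h, Int.divModEquiv] using
        (hasSum_jacobiTheta₂_term _ im_mul).mul_left
          (Complex.exp (π * Complex.I * (a / q) * (r : ℕ) ^ 2) *
            Complex.exp (π * Complex.I * w * (r : ℕ) ^ 2)))
  rw [sum_residues.unique (hasSum_fintype _), mul_sum, Finset.sum_range]
  refine sum_congr rfl fun r _ ↦ ?_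
  rw [mul_assoc, exp_mul_jacobiTheta₂_natCast_mul _ hw0, mul_left_comm]

theorem tendsto_sqrt_mul_jacobiTheta₂ {a : ℤ} {q : ℕ} [NeZero q] (h : Even (a * q)) :
    Tendsto (fun w ↦ Complex.sqrt (-Complex.I * w) * jacobiTheta₂ 0 (a / q + w))
      horodiscsAtZero (𝓝 (quadraticExpSum a q / q)) := by
  have hq : (q : ℂ) ≠ 0 := NeZero.ne _
  have theta_tendsto (r : ℕ) : Tendsto (fun w : ℂ ↦ jacobiTheta₂ (r / q) (-1 / (q ^ 2 * w)))
      horodiscsAtZero (𝓝 1) := by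
    have im_tendsto : Tendsto (fun w : ℂ ↦ -1 / (q ^ 2 * w))
        horodiscsAtZero (comap Complex.im atTop) := by
      have q_pos : 0 < ((q : ℝ) ^ 2)⁻¹ := by
        have : 0 < q := Nat.pos_of_neZero q
        positivity
      refine tendsto_comap_iff.mpr ((tendsto_comap.const_mul_atTop q_pos).congr fun w ↦ ?_)
      rw [Function.comp_apply, ← Complex.im_ofReal_mul]
      congr 1
      push_cast
      ring
    simpa [Function.comp_def] using (tendsto_jacobiTheta₂_ofReal (r / q)).comp im_tendsto
  have sum_tendsto := (tendsto_finsetSum (range q) fun r _ ↦ (theta_tendsto r).const_mul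
    (Complex.exp (π * Complex.I * (a / q) * r ^ 2))).div_const (q : ℂ)
  simp only [mul_one] at sum_tendsto
  refine sum_tendsto.congr' ?_
  filter_upwards [tendsto_comap.eventually_gt_atTop 0] with w hw
  have w_ne : w ≠ 0 := by rintro rfl; simp at hw
  have w_im : 0 < w.im := by
    rw [neg_div, one_div, Complex.neg_im, Complex.inv_im, neg_div, neg_neg] at hw
    exact (div_pos_iff_of_pos_right (Complex.normSq_pos.mpr w_ne)).mp hw
  have sqrt_ne : Complex.sqrt (-(Complex.I * w)) ≠ 0 := by
    simp [sqrt_eq_zero_iff, w_ne]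
  have sqrt_mul : Complex.sqrt (-Complex.I * (q ^ 2 * w)) = q * Complex.sqrt (-Complex.I * w) := by
    have := sqrt_ofReal_mul (sq_nonneg (q : ℝ)) (-Complex.I * w)
    rwa [Real.sqrt_sq q.cast_nonneg, mul_left_comm, Complex.ofReal_pow, Complex.ofReal_natCast]
      at this
  rw [jacobiTheta₂_zero_add h w_im, sqrt_mul]
  field_simp

theorem tendsto_sqrt_mul_jacobiTheta₂_vertical {a : ℤ} {q : ℕ} [NeZero q] (h : Even (a * q)) :
    Tendsto (fun t : ℝ ↦ (√t : ℂ) * jacobiTheta₂ 0 (a / q + t * Complex.I))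
      (𝓝[>] 0) (𝓝 (quadraticExpSum a q / q)) := by
  have cusp : Tendsto (fun t : ℝ ↦ (t : ℂ) * Complex.I) (𝓝[>] 0)
      horodiscsAtZero := by
    refine tendsto_comap_iff.mpr (tendsto_inv_nhdsGT_zero.congr fun t ↦ ?_)
    simp [neg_div, Complex.normSq_apply]
  refine ((tendsto_sqrt_mul_jacobiTheta₂ h).comp cusp).congr' ?_
  filter_upwards [self_mem_nhdsWithin] with t ht
  have sqrt_t : Complex.sqrt (-Complex.I * (t * Complex.I)) = √t := by
    have := sqrt_ofReal_mul (le_of_lt ht) 1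
    rw [Complex.sqrt_one, mul_one, mul_one] at this
    rw [← this]
    congr 1
    linear_combination (-t : ℂ) * Complex.I_sq
  rw [Function.comp_apply, sqrt_t]

theorem jacobiTheta₂_zero_neg_inv {τ : ℂ} (hτ : τ ≠ 0) :
    jacobiTheta₂ 0 (-1 / τ) = Complex.sqrt (-Complex.I * τ) * jacobiTheta₂ 0 τ := by
  have sqrt_ne : Complex.sqrt (-Complex.I * τ) ≠ 0 := by
    rw [Ne, sqrt_eq_zero_iff]
    exact mul_ne_zero (neg_ne_zero.mpr Complex.I_ne_zero) hτ
  have functional_equation := jacobiTheta₂_functional_equation 0 τ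
  rw [one_div (2 : ℂ), ← Complex.sqrt, zero_pow two_ne_zero, mul_zero, zero_div,
    Complex.exp_zero, mul_one] at functional_equation
  rw [functional_equation, ← mul_assoc, mul_one_div_cancel sqrt_ne, one_mul]

section NearPositiveReal

variable {s : ℝ}

theorem ofReal_add_mul_I_ne_zero (hs : 0 < s) (t : ℝ) : (s + t * Complex.I : ℂ) ≠ 0 := fun h ↦ by
  simpa [hs.ne'] using congrArg Complex.re h

theorem neg_one_div_ofReal_add_mul_I (hs : 0 < s) (t : ℝ) :
    -1 / (s + t * Complex.I) =
      -(s : ℂ)⁻¹ + Complex.I * (t * ((s : ℂ)⁻¹ / (s + t * Complex.I))) := by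
  have hs' : (s : ℂ) ≠ 0 := mod_cast hs.ne'
  have := ofReal_add_mul_I_ne_zero hs t
  field_simp
  ring

theorem tendsto_ofReal_add_mul_I (s : ℝ) :
    Tendsto (fun t : ℝ ↦ (s + t * Complex.I : ℂ)) (𝓝[>] 0) (𝓝 s) := by
  have : Continuous fun t : ℝ ↦ (s + t * Complex.I : ℂ) := by fun_prop
  simpa using (this.tendsto 0).mono_left nhdsWithin_le_nhds

theorem tendsto_horodiscsAtZero (hs : 0 < s) :
    Tendsto (fun t : ℝ ↦ Complex.I * (t * ((s : ℂ)⁻¹ / (s + t * Complex.I)))) (𝓝[>] 0)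
      horodiscsAtZero := by
  refine tendsto_comap_iff.mpr
    ((tendsto_inv_nhdsGT_zero.const_mul_atTop (sq_pos_of_pos hs)).congr' ?_)
  filter_upwards [self_mem_nhdsWithin] with t ht
  have hs' : (s : ℂ) ≠ 0 := mod_cast hs.ne'
  have ht' : (t : ℂ) ≠ 0 := mod_cast (ne_of_gt ht)
  have := ofReal_add_mul_I_ne_zero hs t
  have neg_inv : -1 / (Complex.I * (t * ((s : ℂ)⁻¹ / (s + t * Complex.I)))) =
      ((s * t⁻¹ : ℝ) : ℂ) * (Complex.I * (s + t * Complex.I)) := by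
    push_cast
    field_simp
    rw [Complex.I_sq]
    ring
  rw [Function.comp_apply, neg_inv, Complex.im_ofReal_mul]
  simp only [Complex.I_mul_im, Complex.add_re, Complex.ofReal_re, Complex.re_ofReal_mul,
    Complex.I_re, mul_zero, add_zero]
  ring

theorem tendsto_sqrt_div_mul_sqrt (hs : 0 < s) :
    Tendsto (fun τ : ℂ ↦ Complex.sqrt ((s : ℂ)⁻¹ / τ) * Complex.sqrt (-Complex.I * τ)) (𝓝 s)
      (𝓝 ((s : ℂ)⁻¹ * Complex.sqrt (-Complex.I * s))) := by
  have hs' : (s : ℂ) ≠ 0 := mod_cast hs.ne'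
  have value : ((s⁻¹ * s⁻¹ : ℝ) : ℂ) = (s : ℂ)⁻¹ / s := by
    push_cast
    rw [div_eq_mul_inv]
  have sqrt_value : Complex.sqrt ((s : ℂ)⁻¹ / s) = (s : ℂ)⁻¹ := by
    rw [← value, Complex.sqrt_of_nonneg (mod_cast mul_self_nonneg s⁻¹), Complex.ofReal_re,
      Real.sqrt_mul_self (inv_nonneg.mpr hs.le), Complex.ofReal_inv]
  have cont_left : ContinuousAt (fun τ : ℂ ↦ Complex.sqrt ((s : ℂ)⁻¹ / τ)) s := by
    refine (Complex.continuousAt_sqrt (Or.inl ?_)).comp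
      (continuousAt_const.div₀ continuousAt_id hs')
    rw [← value, Complex.ofReal_re]
    positivity
  have cont_right : ContinuousAt (fun τ : ℂ ↦ Complex.sqrt (-Complex.I * τ)) s :=
    (Complex.continuousAt_sqrt (by simp)).comp (continuousAt_const.mul continuousAt_id)
  simpa only [sqrt_value] using cont_left.tendsto.mul cont_right.tendsto

end NearPositiveReal

-- The functional equation compares the growth of the theta function at the cusps `a / b`, `-b / a`.
theorem quadraticExpSum_reciprocity {a b : ℕ} [NeZero a] [NeZero b] (h : Even (a * b)) :
    quadraticExpSum (-b) a = Complex.sqrt (-Complex.I * (a / b)) * quadraticExpSum a b := by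
  have ha : (a : ℂ) ≠ 0 := NeZero.ne _
  have hb : (b : ℂ) ≠ 0 := NeZero.ne _
  set s : ℝ := a / b with s_def
  have s_cast : (s : ℂ) = (a : ℤ) / b := by rw [s_def]; push_cast; rfl
  have neg_inv_cast : -(s : ℂ)⁻¹ = (-b : ℤ) / a := by
    rw [s_cast]; push_cast; rw [inv_div, neg_div]
  have hs : 0 < s :=
    div_pos (Nat.cast_pos.mpr (Nat.pos_of_neZero a)) (Nat.cast_pos.mpr (Nat.pos_of_neZero b))
  have lim_a := (tendsto_sqrt_mul_jacobiTheta₂ (a := -b) (q := a)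
    (by rw [neg_mul, even_neg, mul_comm]; exact mod_cast h)).comp (tendsto_horodiscsAtZero hs)
  have lim_b := ((tendsto_sqrt_div_mul_sqrt hs).comp (tendsto_ofReal_add_mul_I s)).mul
    (tendsto_sqrt_mul_jacobiTheta₂_vertical (a := a) (q := b) (mod_cast h))
  have eq_lim := tendsto_nhds_unique lim_a (lim_b.congr' ?_)
  · rw [s_cast] at eq_lim
    push_cast at eq_lim
    field_simp at eq_lim ⊢
    exact eq_lim
  · filter_upwards [self_mem_nhdsWithin] with t ht
    have sqrt_mul :
        Complex.sqrt (-Complex.I * (Complex.I * (t * ((s : ℂ)⁻¹ / (s + t * Complex.I))))) =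
          √t * Complex.sqrt ((s : ℂ)⁻¹ / (s + t * Complex.I)) := by
      rw [← sqrt_ofReal_mul (le_of_lt ht), ← mul_assoc, neg_mul, Complex.I_mul_I, neg_neg, one_mul]
    simp only [Function.comp_apply]
    rw [sqrt_mul, ← neg_inv_cast, ← s_cast, ← neg_one_div_ofReal_add_mul_I hs,
      jacobiTheta₂_zero_neg_inv (ofReal_add_mul_I_ne_zero hs t)]
    ring

theorem sum_zmod_val {M : Type*} [AddCommMonoid M] (N : ℕ) [NeZero N] (f : ℕ → M) :
    ∑ a : ZMod N, f a.val = ∑ j ∈ range N, f j := by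
  refine sum_nbij' (fun a ↦ a.val) (fun j ↦ (j : ZMod N)) ?_ ?_ ?_ ?_ ?_
  · simp [ZMod.val_lt]
  · simp
  · simp
  · intro j hj
    exact ZMod.val_cast_of_lt (mem_range.mp hj)
  · simp

theorem sum_addChar_sq_eq_gaussSum {F R : Type*} [Field F] [Fintype F] [DecidableEq F] [CommRing R]
    [IsDomain R] (hF : ringChar F ≠ 2) {ψ : AddChar F R} (hψ : ψ ≠ 1) :
    ∑ b, ψ (b ^ 2) = gaussSum ((quadraticChar F).ringHomComp (Int.castRingHom R)) ψ := by
  have card_sqrts (a : F) : (#{b | b ^ 2 = a} : R) = quadraticChar F a + 1 := by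
    have := quadraticChar_card_sqrts hF a
    rw [Set.toFinset_ofPred] at this
    exact_mod_cast congrArg (Int.cast : ℤ → R) this
  calc ∑ b, ψ (b ^ 2)
      = ∑ a, ∑ b with b ^ 2 = a, ψ (b ^ 2) := (sum_fiberwise _ _ _).symm
    _ = ∑ a, (#{b : F | b ^ 2 = a} : R) * ψ a := by
      refine sum_congr rfl fun a _ ↦ ?_
      rw [sum_congr rfl fun b hb ↦ by rw [(mem_filter.mp hb).2], sum_const, nsmul_eq_mul]
    _ = gaussSum ((quadraticChar F).ringHomComp (Int.castRingHom R)) ψ := by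
      simp_rw [card_sqrts, add_mul, one_mul, sum_add_distrib, AddChar.sum_eq_zero_of_ne_one hψ,
        add_zero]
      rfl

theorem quadraticExpSum_two (N : ℕ) [NeZero N] :
    quadraticExpSum 2 N = ∑ b : ZMod N, ZMod.stdAddChar (b ^ 2) := by
  rw [quadraticExpSum, ← sum_zmod_val N fun r ↦ Complex.exp (π * Complex.I * ((2 : ℤ) / N) * r ^ 2)]
  refine sum_congr rfl fun b _ ↦ ?_
  have cast_sq : b ^ 2 = (((b.val : ℤ) ^ 2 : ℤ) : ZMod N) := by simp
  rw [cast_sq, ZMod.stdAddChar_coe]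
  congr 1
  push_cast
  ring

theorem quadraticExpSum_neg_two {q : ℕ} (hq : q % 4 = 3) :
    quadraticExpSum (-q) 2 = 1 + Complex.I := by
  obtain ⟨k, rfl⟩ : ∃ k, q = 4 * k + 3 := ⟨q / 4, by lia⟩
  have exponent : (π * Complex.I * ((-(4 * k + 3 : ℕ) : ℤ) / (2 : ℕ)) * (1 : ℕ) ^ 2 : ℂ) =
      π / 2 * Complex.I + (-(k + 1) : ℤ) * (2 * π * Complex.I) := by
    push_cast
    ring
  rw [quadraticExpSum, sum_range_succ, sum_range_one, exponent, Complex.exp_periodic.int_mul,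
    Complex.exp_pi_div_two_mul_I]
  simp

theorem quadraticExpSum_two_of_mod_four_eq_three {q : ℕ} (hq : q % 4 = 3) :
    quadraticExpSum 2 q = Complex.I * √q := by
  have : NeZero q := ⟨by rintro rfl; simp at hq⟩
  have hq' : (√q : ℂ) ≠ 0 := by simpa using NeZero.ne q
  have hsqrt : Complex.sqrt (-Complex.I * ((2 : ℕ) / q)) = (1 - Complex.I) / √q := by
    have : -Complex.I * ((2 : ℕ) / q) = ((2 / q : ℝ) : ℂ) * -Complex.I := by
      push_cast
      ring
    rw [this, sqrt_ofReal_mul (by positivity), Complex.sqrt_neg_I, Real.sqrt_div zero_le_two,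
      Real.sqrt_inv]
    push_cast
    have : (√2 : ℂ) ≠ 0 := by simp
    field_simp
  have reciprocity := quadraticExpSum_reciprocity (a := 2) (b := q) (even_two_mul q)
  rw [quadraticExpSum_neg_two hq, hsqrt] at reciprocity
  field_simp at reciprocity
  linear_combination -(1 + Complex.I) / 2 * reciprocity +
    (√q + quadraticExpSum 2 q) / 2 * Complex.I_sq

theorem gaussSum_quadraticChar_of_mod_four_eq_three {p : ℕ} [Fact p.Prime] (hp : p % 4 = 3) :
    gaussSum ((quadraticChar (ZMod p)).ringHomComp (Int.castRingHom ℂ)) ZMod.stdAddChar =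
      Complex.I * √p := by
  have char_ne_two : ringChar (ZMod p) ≠ 2 := by
    rw [ZMod.ringChar_zmod_n]
    rintro rfl
    simp at hp
  rw [← quadraticExpSum_two_of_mod_four_eq_three hp, quadraticExpSum_two,
    sum_addChar_sq_eq_gaussSum char_ne_two]
  exact fun h ↦ one_ne_zero (ZMod.injective_stdAddChar (a₁ := 1) (a₂ := 0) (by rw [h]; rfl))

theorem abs_sum_mul_le_of_antitone {g f : ℕ → ℝ} {B : ℝ} (hg : Antitone g) (hg0 : ∀ k, 0 ≤ g k)
    (hf : ∀ n, |∑ k ∈ range n, f k| ≤ B) (n : ℕ) :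
    |∑ k ∈ range n, g k * f k| ≤ g 0 * B := by
  have abs_mul_le {c : ℝ} (hc : 0 ≤ c) (m : ℕ) : |c * ∑ k ∈ range m, f k| ≤ c * B := by
    rw [abs_mul, abs_of_nonneg hc]
    exact mul_le_mul_of_nonneg_left (hf m) hc
  have by_parts := sum_range_by_parts g f n
  simp only [smul_eq_mul] at by_parts
  calc |∑ k ∈ range n, g k * f k|
      = |g (n - 1) * ∑ k ∈ range n, f k +
          ∑ i ∈ range (n - 1), (g i - g (i + 1)) * ∑ k ∈ range (i + 1), f k| := by
        rw [by_parts, sub_eq_add_neg, ← sum_neg_distrib]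
        simp only [← neg_mul, neg_sub]
    _ ≤ g (n - 1) * B + ∑ i ∈ range (n - 1), (g i - g (i + 1)) * B :=
        (abs_add_le _ _).trans <| add_le_add (abs_mul_le (hg0 _) n) <|
          (abs_sum_le_sum_abs _ _).trans <| sum_le_sum fun i _ ↦
            abs_mul_le (sub_nonneg.mpr (hg i.le_succ)) _
    _ = g 0 * B := by
        rw [← sum_mul, sum_range_sub']
        ring

theorem abs_sum_range_add_le {f : ℕ → ℝ} {B : ℝ} (hf : ∀ n, |∑ k ∈ range n, f k| ≤ B) (m n : ℕ) :
    |∑ k ∈ range n, f (m + k)| ≤ 2 * B := by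
  rw [← add_sub_cancel_left (∑ k ∈ range m, f k) (∑ k ∈ range n, f (m + k)), ← sum_range_add,
    two_mul]
  exact (abs_sub _ _).trans (add_le_add (hf _) (hf _))

theorem exists_tendsto_sum_div {f : ℕ → ℝ} {B : ℝ} (hf : ∀ n, |∑ k ∈ range n, f k| ≤ B) :
    ∃ L, Tendsto (fun n ↦ ∑ k ∈ range n, f k / k) atTop (𝓝 L) := by
  have antitone_weights : Antitone fun n : ℕ ↦ (1 / (n + 1) : ℝ) :=
    fun _ _ ↦ Nat.one_div_le_one_div
  obtain ⟨L, hL⟩ := cauchySeq_tendsto_of_complete <|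
    antitone_weights.cauchySeq_series_mul_of_tendsto_zero_of_bounded
      (z := fun k ↦ f (1 + k)) tendsto_one_div_add_atTop_nhds_zero_nat (abs_sum_range_add_le hf 1)
  refine ⟨L, (tendsto_add_atTop_iff_nat 1).mp (hL.congr fun n ↦ ?_)⟩
  rw [sum_range_succ']
  simp [add_comm 1, div_eq_inv_mul]

theorem sum_range_mul_zeta {R : Type*} [Semiring R] (f : ArithmeticFunction R) (n : ℕ) :
    ∑ k ∈ range (n + 1), (f * ArithmeticFunction.zeta) k =
      ∑ k ∈ range (n + 1), f k * ((n / k : ℕ) : R) := by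
  have sum_Ioc (g : ℕ → R) (h0 : g 0 = 0) : ∑ k ∈ range (n + 1), g k = ∑ k ∈ Ioc 0 n, g k := by
    rw [range_eq_Ico, sum_eq_sum_Ico_succ_bot n.succ_pos, h0, zero_add, Nat.succ_eq_add_one,
      Ico_add_one_add_one_eq_Ioc]
  rw [sum_Ioc _ (by simp), sum_Ioc _ (by simp), ArithmeticFunction.sum_Ioc_mul_zeta_eq_sum]

theorem neg_two_mul_div_le_sum_div {f : ArithmeticFunction ℝ} {B : ℝ}
    (hf : ∀ n, |∑ k ∈ range n, f k| ≤ B) (hpos : ∀ n, 0 ≤ (f * ArithmeticFunction.zeta) n)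
    (M : ℕ) : -(2 * B / (M + 1)) ≤ ∑ k ∈ range (M + 1), f k / k := by
  -- With `M!` terms, the floors `⌊M! / k⌋` of the main part `k ≤ M` are exact.
  obtain ⟨n, hn⟩ := Nat.exists_eq_add_of_le M.self_le_factorial
  have total_nonneg : 0 ≤ ∑ k ∈ range (M.factorial + 1), f k * ((M.factorial / k : ℕ) : ℝ) :=
    sum_range_mul_zeta f M.factorial ▸ sum_nonneg fun k _ ↦ hpos k
  have main_part : ∑ k ∈ range (M + 1), f k * ((M.factorial / k : ℕ) : ℝ) =
      M.factorial * ∑ k ∈ range (M + 1), f k / k := by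
    rw [mul_sum]
    refine sum_congr rfl fun k hk ↦ ?_
    rcases k.eq_zero_or_pos with rfl | hk0
    · simp
    · rw [Nat.cast_div (Nat.dvd_factorial hk0 (by simpa [Nat.lt_succ_iff] using hk))
        (by positivity)]
      ring
  have tail_le : |∑ i ∈ range n, ((M.factorial / (M + 1 + i) : ℕ) : ℝ) * f (M + 1 + i)| ≤
      ((M.factorial / (M + 1 + 0) : ℕ) : ℝ) * (2 * B) := by
    refine abs_sum_mul_le_of_antitone (g := fun i ↦ ((M.factorial / (M + 1 + i) : ℕ) : ℝ)) ?_
      (fun _ ↦ Nat.cast_nonneg _) (abs_sum_range_add_le hf (M + 1)) n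
    intro i j hij
    exact Nat.cast_le.mpr (Nat.div_le_div_left (by lia) (by lia))
  have hB : 0 ≤ 2 * B := by simpa using hf 0
  have floor_le : ((M.factorial / (M + 1 + 0) : ℕ) : ℝ) * (2 * B) ≤
      M.factorial * (2 * B / (M + 1)) := by
    refine (mul_le_mul_of_nonneg_right Nat.cast_div_le hB).trans_eq ?_
    push_cast
    ring
  have hM : (0 : ℝ) < M.factorial := by exact_mod_cast M.factorial_pos
  rw [hn, add_right_comm, sum_range_add, ← hn, main_part,
    sum_congr rfl fun i _ ↦ mul_comm (f (M + 1 + i)) _] at total_nonneg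
  refine le_of_mul_le_mul_left ?_ hM
  linarith [le_abs_self (∑ i ∈ range n, ((M.factorial / (M + 1 + i) : ℕ) : ℝ) * f (M + 1 + i))]

theorem exists_nonneg_tendsto_sum_div {f : ArithmeticFunction ℝ} {B : ℝ}
    (hf : ∀ n, |∑ k ∈ range n, f k| ≤ B) (hpos : ∀ n, 0 ≤ (f * ArithmeticFunction.zeta) n) :
    ∃ L, 0 ≤ L ∧ Tendsto (fun n ↦ ∑ k ∈ range n, f k / k) atTop (𝓝 L) := by
  obtain ⟨L, hL⟩ := exists_tendsto_sum_div hf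
  refine ⟨L, ?_, hL⟩
  have lower_bound : Tendsto (fun M : ℕ ↦ -(2 * B / (M + 1))) atTop (𝓝 0) := by
    simpa [div_eq_mul_inv] using (tendsto_one_div_add_atTop_nhds_zero_nat.const_mul (2 * B)).neg
  exact le_of_tendsto_of_tendsto' lower_bound ((tendsto_add_atTop_iff_nat 1).mpr hL)
    (neg_two_mul_div_le_sum_div hf hpos)

theorem one_sub_exp_mul_I (θ : ℝ) : 1 - Complex.exp (θ * Complex.I) =
    (2 * Real.sin (θ / 2) : ℝ) * (Real.cos ((θ - π) / 2) + Real.sin ((θ - π) / 2) * Complex.I) := by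
  have cos_eq : Real.cos θ = 1 - 2 * Real.sin (θ / 2) ^ 2 := by
    rw [← Real.cos_two_mul_eq_one_sub, mul_div_cancel₀ θ two_ne_zero]
  have sin_eq : Real.sin θ = 2 * Real.sin (θ / 2) * Real.cos (θ / 2) := by
    rw [← Real.sin_two_mul, mul_div_cancel₀ θ two_ne_zero]
  rw [sub_div, Real.cos_sub_pi_div_two, Real.sin_sub_pi_div_two, Complex.exp_mul_I,
    ← Complex.ofReal_cos, ← Complex.ofReal_sin, cos_eq, sin_eq]
  push_cast
  ring

theorem arg_one_sub_exp_mul_I {θ : ℝ} (hθ : θ ∈ Set.Ioo 0 (2 * π)) :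
    Complex.arg (1 - Complex.exp (θ * Complex.I)) = (θ - π) / 2 := by
  obtain ⟨hθ_pos, hθ_lt⟩ := hθ
  have sin_pos := Real.sin_pos_of_pos_of_lt_pi (half_pos hθ_pos) (by linarith)
  rw [one_sub_exp_mul_I, Complex.ofReal_cos, Complex.ofReal_sin]
  exact Complex.arg_mul_cos_add_sin_mul_I (mul_pos two_pos sin_pos) ⟨by linarith, by linarith⟩

theorem one_sub_mem_slitPlane {z : ℂ} (hz : ‖z‖ ≤ 1) (hz1 : z ≠ 1) :
    1 - z ∈ Complex.slitPlane := by
  by_contra h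
  rw [Complex.mem_slitPlane_iff, not_or, not_lt, not_not] at h
  have hre : z.re = 1 :=
    le_antisymm (z.re_le_norm.trans hz) (by simpa using h.1)
  exact hz1 (Complex.ext hre (by simpa using h.2))

theorem eval_zero_of_odd {N : ℕ} {χ : DirichletCharacter ℂ N} (hχ : χ.Odd) : χ 0 = 0 :=
  self_eq_neg.mp (by simpa using DirichletCharacter.Odd.eval_neg χ 0 hχ)

theorem ne_one_of_odd {N : ℕ} {χ : DirichletCharacter ℂ N} (hχ : χ.Odd) : χ ≠ 1 := by
  rintro rfl
  rw [DirichletCharacter.Odd, MulChar.one_apply isUnit_one.neg] at hχ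
  norm_num at hχ

section ZMod

variable {N : ℕ} [NeZero N]

theorem norm_stdAddChar (a : ZMod N) : ‖(ZMod.stdAddChar a : ℂ)‖ = 1 := by
  rw [ZMod.stdAddChar_apply, Circle.norm_coe]

theorem one_sub_stdAddChar_mem_slitPlane {a : ZMod N} (ha : a ≠ 0) :
    1 - (ZMod.stdAddChar a : ℂ) ∈ Complex.slitPlane :=
  one_sub_mem_slitPlane (norm_stdAddChar a).le fun h ↦
    ha (ZMod.injective_stdAddChar (h.trans (AddChar.map_zero_eq_one _).symm))

theorem arg_one_sub_stdAddChar {a : ZMod N} (ha : a ≠ 0) :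
    Complex.arg (1 - ZMod.stdAddChar a) = π * a.val / N - π / 2 := by
  have hN : (0 : ℝ) < N := by exact_mod_cast NeZero.pos N
  have val_pos : (0 : ℝ) < a.val := by exact_mod_cast ZMod.val_pos.mpr ha
  have val_lt : (a.val : ℝ) < N := by exact_mod_cast a.val_lt
  have std_eq : (ZMod.stdAddChar a : ℂ) = Complex.exp ((2 * π * (a.val / N) : ℝ) * Complex.I) := by
    rw [ZMod.stdAddChar_apply, ZMod.toCircle_apply]
    push_cast
    ring_nf
  rw [std_eq, arg_one_sub_exp_mul_I]
  · ring
  · refine ⟨by positivity, mul_lt_of_lt_one_right Real.two_pi_pos ?_⟩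
    rwa [div_lt_one hN]

theorem log_one_sub_stdAddChar_sub_log {a : ZMod N} (ha : a ≠ 0) :
    Complex.log (1 - ZMod.stdAddChar a) - Complex.log (1 - ZMod.stdAddChar (-a)) =
      2 * (π * a.val / N - π / 2) * Complex.I := by
  have conj_eq : 1 - (ZMod.stdAddChar (-a) : ℂ) = (starRingEnd ℂ) (1 - ZMod.stdAddChar a) := by
    rw [map_sub, map_one, AddChar.map_neg_eq_conj]
  have arg_ne_pi := (Complex.mem_slitPlane_iff_arg.mp (one_sub_stdAddChar_mem_slitPlane ha)).1
  rw [conj_eq, Complex.log_conj _ arg_ne_pi, Complex.sub_conj, Complex.log_im,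
    arg_one_sub_stdAddChar ha]
  push_cast
  ring

variable {χ : DirichletCharacter ℂ N}

theorem tsum_inv_div_mul_gaussSum (hχ : χ.IsPrimitive) {z : ℂ} (hz : ‖z‖ < 1) :
    (∑' n : ℕ, χ⁻¹ n / n * z ^ n) * gaussSum χ ZMod.stdAddChar =
      ∑ a, χ a * -Complex.log (1 - z * ZMod.stdAddChar a) := by
  have hasSum_log : HasSum (fun n : ℕ ↦ ∑ a, χ a * ((z * ZMod.stdAddChar a) ^ n / n))
      (∑ a, χ a * -Complex.log (1 - z * ZMod.stdAddChar a)) :=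
    hasSum_sum fun a _ ↦ (Complex.hasSum_taylorSeries_neg_log <| by
      rwa [norm_mul, norm_stdAddChar, mul_one]).mul_left _
  rw [← tsum_mul_right, ← hasSum_log.tsum_eq]
  refine tsum_congr fun n ↦ ?_
  calc χ⁻¹ n / n * z ^ n * gaussSum χ ZMod.stdAddChar
      = z ^ n / n * gaussSum χ (ZMod.stdAddChar.mulShift n) := by
        rw [gaussSum_mulShift_of_isPrimitive _ hχ]
        ring
    _ = ∑ a, χ a * ((z * ZMod.stdAddChar a) ^ n / n) := by
        rw [gaussSum, mul_sum]
        refine sum_congr rfl fun a _ ↦ ?_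
        rw [AddChar.mulShift_apply, ← nsmul_eq_mul, AddChar.map_nsmul_eq_pow]
        ring

theorem tendsto_sum_mul_log (h0 : χ 0 = 0) :
    Tendsto (fun z ↦ ∑ a, χ a * -Complex.log (1 - z * ZMod.stdAddChar a)) (𝓝 1)
      (𝓝 (∑ a, χ a * -Complex.log (1 - ZMod.stdAddChar a))) := by
  refine tendsto_finsetSum _ fun a _ ↦ ?_
  rcases eq_or_ne a 0 with rfl | ha
  · simp [h0]
  · have : Tendsto (fun z : ℂ ↦ 1 - z * ZMod.stdAddChar a) (𝓝 1) (𝓝 (1 - ZMod.stdAddChar a)) := by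
      simpa using ((tendsto_id (x := 𝓝 (1 : ℂ))).mul_const (ZMod.stdAddChar a : ℂ)).const_sub 1
    exact (this.clog (one_sub_stdAddChar_mem_slitPlane ha)).neg.const_mul _

theorem mul_gaussSum_eq_sum_log (hχ : χ.IsPrimitive) (h0 : χ 0 = 0) {L : ℂ}
    (hL : Tendsto (fun n ↦ ∑ k ∈ range n, χ⁻¹ k / k) atTop (𝓝 L)) :
    L * gaussSum χ ZMod.stdAddChar = ∑ a, χ a * -Complex.log (1 - ZMod.stdAddChar a) := by
  have radial : Tendsto ((↑) : ℝ → ℂ) (𝓝[<] 1) (𝓝 1) :=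
    (Complex.continuous_ofReal.tendsto' 1 1 Complex.ofReal_one).mono_left nhdsWithin_le_nhds
  have abel := tendsto_map'_iff.mp (Complex.tendsto_tsum_powerSeries_nhdsWithin_lt hL)
  refine tendsto_nhds_unique_of_eventuallyEq (abel.mul_const _)
    ((tendsto_sum_mul_log h0).comp radial) ?_
  filter_upwards [Ioo_mem_nhdsLT zero_lt_one] with r hr
  exact tsum_inv_div_mul_gaussSum hχ (by simpa [abs_of_pos hr.1] using hr.2)

theorem sum_mul_log_of_odd (hχ : χ.Odd) :
    ∑ a, χ a * -Complex.log (1 - ZMod.stdAddChar a) =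
      -(π * Complex.I / N) * ∑ a, χ a * a.val := by
  set S := ∑ a, χ a * -Complex.log (1 - ZMod.stdAddChar a) with hS
  have reflect : S = ∑ a, χ a * Complex.log (1 - ZMod.stdAddChar (-a)) := by
    rw [hS, ← Equiv.sum_comp (Equiv.neg _)]
    simp [DirichletCharacter.Odd.eval_neg _ _ hχ]
  have pair_eq (a : ZMod N) : χ a * -Complex.log (1 - ZMod.stdAddChar a) +
      χ a * Complex.log (1 - ZMod.stdAddChar (-a)) =
        -(2 * π * Complex.I / N) * (χ a * a.val) + π * Complex.I * χ a := by
    rcases eq_or_ne a 0 with rfl | ha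
    · simp [eval_zero_of_odd hχ]
    · linear_combination -χ a * log_one_sub_stdAddChar_sub_log ha
  have two_mul_S : 2 * S = -(2 * π * Complex.I / N) * ∑ a, χ a * a.val := by
    calc 2 * S = S + ∑ a, χ a * Complex.log (1 - ZMod.stdAddChar (-a)) := by rw [← reflect, two_mul]
      _ = -(2 * π * Complex.I / N) * ∑ a, χ a * a.val := by
        rw [hS, ← sum_add_distrib, sum_congr rfl fun a _ ↦ pair_eq a, sum_add_distrib,
          ← mul_sum, ← mul_sum, MulChar.sum_eq_zero_of_ne_one (ne_one_of_odd hχ), mul_zero,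
          add_zero]
  linear_combination two_mul_S / 2

theorem mul_gaussSum_of_odd (hχ : χ.IsPrimitive) (hodd : χ.Odd) {L : ℂ}
    (hL : Tendsto (fun n ↦ ∑ k ∈ range n, χ⁻¹ k / k) atTop (𝓝 L)) :
    L * gaussSum χ ZMod.stdAddChar = -(π * Complex.I / N) * ∑ a, χ a * a.val := by
  rw [mul_gaussSum_eq_sum_log hχ (eval_zero_of_odd hodd) hL, sum_mul_log_of_odd hodd]

end ZMod

theorem sum_range_mod_of_periodic {M : Type*} [AddCommMonoid M] {f : ℕ → M} {q : ℕ}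
    (hf : Function.Periodic f q) (h0 : ∑ k ∈ range q, f k = 0) (n : ℕ) :
    ∑ k ∈ range n, f k = ∑ k ∈ range (n % q), f k := by
  have block (m k : ℕ) : ∑ i ∈ range (m * q + k), f i = ∑ i ∈ range k, f i := by
    induction m with
    | zero => simp
    | succ m ih =>
      rw [add_one_mul, add_comm (m * q), add_assoc, sum_range_add, h0, zero_add, ← ih]
      exact sum_congr rfl fun i _ ↦ by rw [add_comm, hf]
  rw [← block (n / q) (n % q), Nat.div_add_mod']

theorem abs_sum_range_le_of_periodic {f : ℕ → ℝ} {q : ℕ} (hq : 0 < q)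
    (hf : Function.Periodic f q) (h0 : ∑ k ∈ range q, f k = 0) (n : ℕ) :
    |∑ k ∈ range n, f k| ≤ ∑ k ∈ range q, |f k| := by
  rw [sum_range_mod_of_periodic hf h0]
  exact (abs_sum_le_sum_abs _ _).trans <| sum_le_sum_of_subset_of_nonneg
    (range_subset_range.mpr (Nat.mod_lt n hq).le) fun _ _ _ ↦ abs_nonneg _

theorem isPrimitive_of_prime_of_ne_one {R : Type*} [CommMonoidWithZero R] {p : ℕ} (hp : p.Prime)
    {χ : DirichletCharacter R p} (hχ : χ ≠ 1) : χ.IsPrimitive := by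
  have : NeZero p := ⟨hp.ne_zero⟩
  exact ((Nat.dvd_prime hp).mp χ.conductor_dvd_level).resolve_left
    (χ.eq_one_iff_conductor_eq_one.not.mp hχ)

section Legendre

variable (p : ℕ) [Fact p.Prime]

/-- The Legendre symbol modulo `p` as a complex Dirichlet character. -/
noncomputable def legendreCharacter : DirichletCharacter ℂ p :=
  (quadraticChar (ZMod p)).ringHomComp (Int.castRingHom ℂ)

/-- The Legendre symbol modulo `p` as a real arithmetic function. -/
noncomputable def legendreArithmeticFunction : ArithmeticFunction ℝ where
  toFun n := quadraticChar (ZMod p) n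
  map_zero' := by simp

theorem legendreCharacter_natCast (n : ℕ) :
    legendreCharacter p n = (legendreArithmeticFunction p n : ℂ) := by
  simp [legendreCharacter, legendreArithmeticFunction]

theorem legendreCharacter_isQuadratic : (legendreCharacter p).IsQuadratic :=
  (quadraticChar_isQuadratic (ZMod p)).comp _

theorem legendreArithmeticFunction_mul_zeta_nonneg (n : ℕ) :
    0 ≤ (legendreArithmeticFunction p * ArithmeticFunction.zeta) n := by
  have cast_eq : (((legendreArithmeticFunction p * ArithmeticFunction.zeta) n : ℝ) : ℂ) =
      (legendreCharacter p).zetaMul n := by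
    rw [ArithmeticFunction.coe_mul_zeta_apply, DirichletCharacter.zetaMul,
      ArithmeticFunction.coe_zeta_mul_apply, Complex.ofReal_sum]
    refine sum_congr rfl fun k hk ↦ ?_
    simp [toArithmeticFunction, (Nat.pos_of_mem_divisors hk).ne', legendreCharacter_natCast]
  have := (legendreCharacter p).zetaMul_nonneg (legendreCharacter_isQuadratic p).sq_eq_one n
  rw [← cast_eq] at this
  exact_mod_cast this

variable {p}

theorem abs_sum_legendreArithmeticFunction_le (hp : p ≠ 2) (n : ℕ) :
    |∑ k ∈ range n, legendreArithmeticFunction p k| ≤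
      ∑ k ∈ range p, |legendreArithmeticFunction p k| := by
  refine abs_sum_range_le_of_periodic (NeZero.pos p)
    (fun k ↦ by simp [legendreArithmeticFunction]) ?_ n
  have sum_zero := quadraticChar_sum_zero (F := ZMod p) (by rwa [ZMod.ringChar_zmod_n])
  rw [← sum_zmod_val]
  simp only [legendreArithmeticFunction, ArithmeticFunction.coe_mk, ZMod.natCast_zmod_val]
  exact_mod_cast sum_zero

theorem legendreCharacter_odd (hp : p % 4 = 3) : (legendreCharacter p).Odd := by
  have hp2 : ringChar (ZMod p) ≠ 2 := by
    rw [ZMod.ringChar_zmod_n]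
    lia
  simp [DirichletCharacter.Odd, legendreCharacter, quadraticChar_neg_one hp2,
    ZMod.χ₄_nat_three_mod_four hp]

theorem sum_quadraticChar_mul_val_nonpos (hp : p % 4 = 3) :
    ∑ a, quadraticChar (ZMod p) a * (a.val : ℤ) ≤ 0 := by
  obtain ⟨L, hL0, hL⟩ := exists_nonneg_tendsto_sum_div
    (abs_sum_legendreArithmeticFunction_le (by lia))
    (legendreArithmeticFunction_mul_zeta_nonneg p)
  have tendsto_L : Tendsto (fun n ↦ ∑ k ∈ range n, (legendreCharacter p)⁻¹ k / k) atTop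
      (𝓝 (L : ℂ)) := by
    simp only [(legendreCharacter_isQuadratic p).inv, legendreCharacter_natCast]
    exact_mod_cast (Complex.continuous_ofReal.tendsto L).comp hL
  have value := mul_gaussSum_of_odd
    (isPrimitive_of_prime_of_ne_one Fact.out (ne_one_of_odd (legendreCharacter_odd hp)))
    (legendreCharacter_odd hp) tendsto_L
  have cast_sum : ∑ a, legendreCharacter p a * a.val =
      ((∑ a, quadraticChar (ZMod p) a * (a.val : ℤ) : ℤ) : ℂ) := by
    simp [legendreCharacter]
  rw [cast_sum, legendreCharacter, gaussSum_quadraticChar_of_mod_four_eq_three hp] at value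
  have real_value : L * √p = -(π / p) * (∑ a, quadraticChar (ZMod p) a * (a.val : ℤ) : ℤ) := by
    refine Complex.ofReal_injective (mul_left_cancel₀ Complex.I_ne_zero ?_)
    push_cast at value ⊢
    linear_combination value
  have pi_div_pos : 0 < π / p := div_pos Real.pi_pos (by exact_mod_cast NeZero.pos p)
  have scaled_nonneg := mul_nonneg hL0 (Real.sqrt_nonneg p)
  rw [real_value, neg_mul, neg_nonneg] at scaled_nonneg
  exact_mod_cast nonpos_of_mul_nonpos_right scaled_nonneg pi_div_pos

end Legendre

theorem val_two_mul {N : ℕ} [NeZero N] (hN : Odd N) (a : ZMod N) :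
    ((2 * a).val : ℤ) = 2 * a.val - N + if a.val ≤ N / 2 then (N : ℤ) else 0 := by
  have := a.val_lt
  have := Nat.odd_iff.mp hN
  rw [two_mul, ZMod.val_add]
  split_ifs with h
  · rw [Nat.mod_eq_of_lt (by lia)]
    lia
  · rw [Nat.mod_eq_sub_mod (by lia), Nat.mod_eq_of_lt (by lia)]
    lia

theorem sum_ite_val_le {M : Type*} [AddCommMonoid M] {N m : ℕ} [NeZero N] (hm : m < N)
    {f : ZMod N → M} (h0 : f 0 = 0) :
    ∑ a, (if a.val ≤ m then f a else 0) = ∑ n ∈ Icc 1 m, f n := by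
  calc ∑ a, (if a.val ≤ m then f a else 0)
      = ∑ j ∈ range N, if j ≤ m then f j else 0 := by
        rw [← sum_zmod_val]
        simp only [ZMod.natCast_zmod_val]
    _ = ∑ j ∈ range N with j ≤ m, f j := (sum_filter _ _).symm
    _ = ∑ n ∈ Icc 1 m, f n := by
        refine (sum_subset (fun n hn ↦ ?_) fun n hn hn' ↦ ?_).symm
        · rw [mem_Icc] at hn
          rw [mem_filter, mem_range]
          lia
        · have : n = 0 := by
            rw [mem_filter] at hn
            rw [mem_Icc] at hn'
            lia
          rw [this, Nat.cast_zero, h0]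

theorem sum_mul_val_eq_two_mul {R : Type*} [CommRing R] [IsDomain R] {N : ℕ} [NeZero N]
    (hN : Odd N) {χ : DirichletCharacter R N} (hχ : χ ≠ 1) :
    ∑ a, χ a * a.val = χ 2 * (2 * ∑ a, χ a * a.val + N * ∑ n ∈ Icc 1 (N / 2), χ n) := by
  have cast_val_two_mul (a : ZMod N) :
      ((2 * a).val : R) = 2 * a.val - N + if a.val ≤ N / 2 then (N : R) else 0 := by
    exact_mod_cast congrArg (Int.cast : ℤ → R) (val_two_mul hN a)
  have N_ne_one : N ≠ 1 := by
    rintro rfl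
    exact hχ χ.level_one
  have half_sum := sum_ite_val_le (Nat.div_lt_self (NeZero.pos N) one_lt_two) (f := χ)
    (χ.map_zero' N_ne_one)
  have two_coprime : Nat.Coprime 2 N := Nat.coprime_two_left.mpr hN
  calc ∑ a, χ a * a.val
      = ∑ a, χ (2 * a) * (2 * a).val := by
        rw [← (ZMod.unitOfCoprime 2 two_coprime).mulLeft_bijective.sum_comp]
        simp
    _ = ∑ a, χ 2 * (2 * (χ a * a.val) - N * χ a + N * if a.val ≤ N / 2 then χ a else 0) := by
        refine sum_congr rfl fun a _ ↦ ?_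
        rw [map_mul, cast_val_two_mul]
        split_ifs <;> ring
    _ = χ 2 * (2 * ∑ a, χ a * a.val + N * ∑ n ∈ Icc 1 (N / 2), χ n) := by
        rw [← mul_sum, sum_add_distrib, sum_sub_distrib, ← mul_sum, ← mul_sum, ← mul_sum,
          MulChar.sum_eq_zero_of_ne_one hχ, half_sum, mul_zero, sub_zero]

theorem odd_sum_of_odd {ι : Type*} {s : Finset ι} {f : ι → ℤ} (hf : ∀ i ∈ s, Odd (f i))
    (hs : Odd #s) : Odd (∑ i ∈ s, f i) := by
  rw [Int.odd_iff, sum_int_mod, sum_congr rfl fun i hi ↦ Int.odd_iff.mp (hf i hi), sum_const,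
    nsmul_one]
  exact Int.odd_iff.mp (by exact_mod_cast hs)

theorem odd_sum_legendreSym {p m : ℕ} [Fact p.Prime] (hmp : m < p) (hm : Odd m) :
    Odd (∑ n ∈ Icc 1 m, legendreSym p (n : ℤ)) := by
  refine odd_sum_of_odd (fun n hn ↦ ?_) (by simpa using hm)
  rw [mem_Icc] at hn
  have : ((n : ℤ) : ZMod p) ≠ 0 := by
    rw [Int.cast_natCast, Ne, ZMod.natCast_eq_zero_iff]
    exact Nat.not_dvd_of_pos_of_lt (by lia) (by lia)
  rcases legendreSym.eq_one_or_neg_one p this with h | h <;> rw [h] <;> decide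

/-- (Dirichlet) For a prime `p ≡ 3 (mod 4)`, the sum of the Legendre symbols
`(n/p)` for `n` from `1` to `(p-1)/2` is strictly positive. -/
theorem sum_legendreSym_pos_of_prime_mod_four_eq_three
    (p : ℕ) [Fact p.Prime] (hmod : p % 4 = 3) :
    0 < ∑ n ∈ Finset.Icc 1 ((p - 1) / 2), legendreSym p (n : ℤ) := by
  have hp2 : ringChar (ZMod p) ≠ 2 := by
    rw [ZMod.ringChar_zmod_n]
    lia
  have half : (p - 1) / 2 = p / 2 := by lia
  rw [half]
  have sum_odd : Odd (∑ n ∈ Icc 1 (p / 2), legendreSym p (n : ℤ)) :=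
    odd_sum_legendreSym (by lia) (Nat.odd_iff.mpr (by lia))
  have moment_nonpos := sum_quadraticChar_mul_val_nonpos hmod
  have doubling := sum_mul_val_eq_two_mul (Nat.odd_iff.mpr (by lia)) (quadraticChar_ne_one hp2)
  have sum_nonneg : 0 ≤ p * ∑ n ∈ Icc 1 (p / 2), legendreSym p (n : ℤ) := by
    simp only [legendreSym, Int.cast_natCast]
    rcases quadraticChar_dichotomy (Ring.two_ne_zero hp2) with h | h <;> rw [h] at doubling <;>
      linarith
  exact (nonneg_of_mul_nonneg_right sum_nonneg (by exact_mod_cast NeZero.pos p)).lt_of_ne'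
    fun h ↦ by simp [h] at sum_odd
end

section
/- Let p be a prime with p ≡ 3 (mod 4). Then the number of quadratic residues of p in [1, (p−1)/2] is strictly greater than the number of non-residues of p in [1, (p−1)/2], i.e. R_b(p) > N_b(p). -/
/-!
Write `χ` for the quadratic character modulo `p ≡ 3 (mod 4)`, so that `χ (-1) = -1`.

The square of the Gauss sum `g` of `χ` is `-p`, which leaves only its sign open. Let
`η = -exp (π * I / p)`, the `p`-th root of unity with `η ^ 2 = exp (2 * π * I / p)`. The product of
`η ^ k - η ^ (-k)` over `1 ≤ k ≤ m = (p - 1) / 2` is `-√p * I`. If `g` were equal to it, the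
difference of the two would come from an integer polynomial vanishing at `η`, hence divisible by
`(X - 1) ^ (2 * m)` modulo `p`; applying the Euler operator `X * d/dX` to it `m` times and
evaluating at `1` would give `(m!) ^ 2 = -1` modulo `p`, impossible for `p ≡ 3 (mod 4)`. Hence
`g = √p * I`.

Expanding `χ` into additive characters, `g * L(1, χ) = -∑ a, χ a * log (1 - ψ a)`, whose imaginary
part is `-(π / p) * ∑ a, χ a * a`. Since the Dirichlet convolution `1 * χ` is nonnegative, so is
`L(1, χ)`, and therefore `T = ∑ a, χ a * a ≤ 0`. Summing `χ a * a` over the pairs `{n, p - n}` and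
over the pairs `{2 * n, p - 2 * n}` with `n ≤ m` shows that `S = ∑ n ≤ m, χ n` satisfies
`χ 2 * p * S = (1 - 2 * χ 2) * T`, so `S ≥ 0`. Finally `S` is the number of residues minus the
number of non-residues among `m` integers, and it cannot vanish because `m` is odd.
-/

namespace SmallResidues

section EulerOperator

open Polynomial
open scoped Nat

/-- The Euler operator `X * d/dX` on polynomials. Each application lowers the order of vanishing
at `1` by one, and it acts on `X ^ k` as multiplication by `k`. -/
noncomputable def eulerOperator (R : Type*) [CommSemiring R] : R[X] →ₗ[R] R[X] :=
  LinearMap.mulLeft R X ∘ₗ derivative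

theorem eulerOperator_apply {R : Type*} [CommSemiring R] (f : R[X]) :
    eulerOperator R f = X * derivative f :=
  rfl

theorem eulerOperator_pow_C_mul_X_pow {R : Type*} [CommSemiring R] (c : R) (m k : ℕ) :
    (eulerOperator R ^ m) (C c * X ^ k) = C (c * k ^ m) * X ^ k := by
  induction m with
  | zero => simp
  | succ m ih =>
    rw [pow_succ', Module.End.mul_apply, ih, eulerOperator_apply, derivative_C_mul_X_pow,
      ← mul_assoc, ← mul_comm (C _), mul_assoc, ← pow_succ']
    cases k with
    | zero => simp
    | succ k => rw [Nat.add_sub_cancel, pow_succ _ m, mul_assoc]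

variable {R : Type*} [CommRing R]

theorem eval_one_eulerOperator_pow (m : ℕ) (q : R[X]) :
    ((eulerOperator R ^ m) ((X - 1) ^ m * q)).eval 1 = m ! * q.eval 1 := by
  induction m generalizing q with
  | zero => simp
  | succ m ih =>
    have hstep : eulerOperator R ((X - 1) ^ (m + 1) * q) =
        (X - 1) ^ m * ((m + 1 : R[X]) * X * q + (X - 1) * X * derivative q) := by
      simp only [eulerOperator_apply, derivative_mul, derivative_pow_succ, derivative_sub,
        derivative_X, derivative_one, map_add, map_natCast, map_one]
      ring
    rw [pow_succ, Module.End.mul_apply, hstep, ih]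
    simp only [eval_add, eval_mul, eval_sub, eval_X, eval_one, eval_natCast, Nat.factorial_succ]
    push_cast
    ring

theorem eval_one_eulerOperator_pow_prod {ι : Type*} (s : Finset ι) (a b : ι → ℕ) :
    ((eulerOperator R ^ s.card) (∏ i ∈ s, (X ^ a i - X ^ b i))).eval 1 =
      s.card ! * ∏ i ∈ s, ((a i : R) - b i) := by
  have hfactor (i : ι) : (X ^ a i - X ^ b i : R[X]) =
      (X - 1) * (∑ j ∈ Finset.range (a i), X ^ j - ∑ j ∈ Finset.range (b i), X ^ j) := by
    rw [mul_sub, mul_geom_sum, mul_geom_sum, sub_sub_sub_cancel_right]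
  simp only [hfactor, Finset.prod_mul_distrib, Finset.prod_const, eval_one_eulerOperator_pow,
    eval_prod, eval_sub, eval_finsetSum, eval_pow, eval_X, one_pow, Finset.sum_const,
    Finset.card_range, nsmul_eq_mul, mul_one]

end EulerOperator

section GaussSum

open Polynomial
open scoped Nat

theorem prod_range_natCast_sub_natCast_sub {m N : ℕ} (hm : m ≤ N) :
    ∏ k ∈ Finset.range m, (((k + 1 : ℕ) : ZMod N) - (N - (k + 1) : ℕ)) = 2 ^ m * m ! := by
  have hterm : ∀ k ∈ Finset.range m,
      ((k + 1 : ℕ) : ZMod N) - (N - (k + 1) : ℕ) = 2 * (k + 1 : ℕ) := by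
    intro k hk
    rw [Nat.cast_sub (by grind), ZMod.natCast_self]
    ring
  rw [Finset.prod_congr rfl hterm, Finset.prod_mul_distrib, Finset.prod_const, Finset.card_range,
    ← Nat.cast_prod, Finset.prod_range_add_one_eq_factorial]

variable {p : ℕ} [Fact p.Prime]

theorem X_sub_one_pow_dvd_map_of_aeval_eq_zero {K : Type*} [Field K] [CharZero K] {η : K}
    (hη : IsPrimitiveRoot η p) {f : ℤ[X]} (hf : aeval η f = 0) :
    (X - 1) ^ (p - 1) ∣ f.map (Int.castRingHom (ZMod p)) := by
  have hp : p.Prime := Fact.out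
  have hcyclotomic : cyclotomic p (ZMod p) = (X - 1) ^ (p - 1) := by
    simpa only [one_mul, cyclotomic_one] using
      cyclotomic_mul_prime_eq_pow_of_not_dvd (ZMod p) (n := 1) hp.not_dvd_one
  rw [← hcyclotomic, ← map_cyclotomic p (Int.castRingHom (ZMod p)),
    cyclotomic_eq_minpoly hη hp.pos]
  exact Polynomial.map_dvd _ (minpoly.isIntegrallyClosed_dvd (hη.isIntegral hp.pos) hf)

theorem sum_pow_mul_two_mul_val_pow {m : ℕ} (hm : m ≠ 0) (hp : p = 2 * m + 1) :
    ∑ a : ZMod p, a ^ m * ((2 * a.val : ℕ) : ZMod p) ^ m = -2 ^ m := by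
  have hterm (a : ZMod p) : a ^ m * ((2 * a.val : ℕ) : ZMod p) ^ m =
      2 ^ m * (1 - if a = 0 then 1 else 0) := by
    rw [Nat.cast_mul, ZMod.natCast_zmod_val, mul_pow, mul_left_comm, ← pow_add]
    split_ifs with ha
    · simp [ha, hm]
    · rw [show m + m = p - 1 by lia, ZMod.pow_card_sub_one_eq_one ha, sub_zero, Nat.cast_ofNat]
  simp only [hterm, ← Finset.mul_sum, Finset.sum_sub_distrib, Finset.sum_const, Finset.card_univ,
    ZMod.card, nsmul_eq_mul, CharP.cast_eq_zero, Finset.sum_ite_eq', Finset.mem_univ,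
    if_true, zero_sub, mul_neg, mul_one]

theorem factorial_sq_eq_neg_one_of_sum_eq_prod {m : ℕ} (hm : m ≠ 0) (hp : p = 2 * m + 1)
    {K : Type*} [Field K] [CharZero K] {η : K} (hη : IsPrimitiveRoot η p)
    (h : ∑ a : ZMod p, (quadraticChar (ZMod p) a : K) * η ^ (2 * a.val) =
      ∏ k ∈ Finset.range m, (η ^ (k + 1) - η ^ (p - (k + 1)))) :
    (m ! : ZMod p) ^ 2 = -1 := by
  set f : ℤ[X] := ∑ a : ZMod p, C (quadraticChar (ZMod p) a) * X ^ (2 * a.val) -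
    ∏ k ∈ Finset.range m, (X ^ (k + 1) - X ^ (p - (k + 1))) with hf
  have hroot : aeval η f = 0 := by
    simp only [hf, map_sub, map_sum, map_prod, map_mul, map_pow, aeval_X, aeval_C,
      algebraMap_int_eq, Int.coe_castRingHom, h, sub_self]
  obtain ⟨u, hu⟩ := X_sub_one_pow_dvd_map_of_aeval_eq_zero hη hroot
  have hu_eval : ((eulerOperator (ZMod p) ^ m) (f.map (Int.castRingHom (ZMod p)))).eval 1 = 0 := by
    rw [hu, show p - 1 = m + m by lia, pow_add, mul_assoc, eval_one_eulerOperator_pow, eval_mul,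
      eval_pow, eval_sub, eval_X, eval_one, sub_self, zero_pow hm, zero_mul, mul_zero]
  have hEuler (a : ZMod p) : ((quadraticChar (ZMod p) a : ℤ) : ZMod p) = a ^ m := by
    rw [quadraticChar_eq_pow_of_char_ne_two' (by rw [ZMod.ringChar_zmod_n]; lia), ZMod.card,
      show p / 2 = m by lia]
  have hkey : -2 ^ m - (m ! : ZMod p) * (2 ^ m * m !) = 0 := by
    have hprod_eval := eval_one_eulerOperator_pow_prod (R := ZMod p) (Finset.range m)
      (fun k ↦ k + 1) (fun k ↦ p - (k + 1))
    rw [Finset.card_range, prod_range_natCast_sub_natCast_sub (by lia)] at hprod_eval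
    rw [← hu_eval, ← hprod_eval, ← sum_pow_mul_two_mul_val_pow hm hp, hf]
    simp only [Polynomial.map_sub, Polynomial.map_sum, Polynomial.map_prod, Polynomial.map_mul,
      Polynomial.map_pow, map_X, map_C, Int.coe_castRingHom, hEuler, map_sub, map_sum,
      eulerOperator_pow_C_mul_X_pow, eval_sub, eval_finsetSum, eval_mul, eval_C, eval_pow, eval_X,
      one_pow, mul_one]
  have htwo : (2 : ZMod p) ^ m ≠ 0 :=
    pow_ne_zero _ (Ring.two_ne_zero (by rw [ZMod.ringChar_zmod_n]; lia))
  exact mul_left_cancel₀ htwo (by linear_combination -hkey)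

end GaussSum

section GaussSumSign

open Complex

theorem prod_pow_sub_pow_sq {K : Type*} [CommRing K] [IsDomain K] {m : ℕ} {η : K}
    (hη : IsPrimitiveRoot η (2 * m + 1)) :
    (∏ k ∈ Finset.range m, (η ^ (k + 1) - η ^ (2 * m + 1 - (k + 1)))) ^ 2 =
      (-1) ^ m * (2 * m + 1) := by
  have hη_sq : IsPrimitiveRoot (η ^ 2) (m + m + 1) :=
    two_mul m ▸ hη.pow_of_coprime 2 (by simp)
  have horder := hη_sq.prod_one_sub_pow_eq_order
  rw [Finset.prod_range_add, ← Finset.prod_range_reflect (fun k ↦ 1 - (η ^ 2) ^ (m + k + 1)),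
    ← Finset.prod_mul_distrib] at horder
  have hpair : ∀ k ∈ Finset.range m, (η ^ (k + 1) - η ^ (2 * m + 1 - (k + 1))) ^ 2 =
      -1 * ((1 - (η ^ 2) ^ (k + 1)) * (1 - (η ^ 2) ^ (m + (m - 1 - k) + 1))) := by
    intro k hk
    have hinv : η ^ (k + 1) * η ^ (2 * m + 1 - (k + 1)) = 1 := by
      rw [← pow_add, show k + 1 + (2 * m + 1 - (k + 1)) = 2 * m + 1 by grind, hη.pow_eq_one]
    rw [show m + (m - 1 - k) + 1 = 2 * m + 1 - (k + 1) by grind, pow_right_comm, pow_right_comm η 2]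
    linear_combination (-1 + η ^ (k + 1) * η ^ (2 * m + 1 - (k + 1))) * hinv
  rw [← Finset.prod_pow, Finset.prod_congr rfl hpair, Finset.prod_mul_distrib, horder,
    Finset.prod_const, Finset.card_range]
  push_cast
  ring

theorem prod_neg_one_pow_mul_I (r : ℕ) :
    ∏ k ∈ Finset.range (2 * r + 1), ((-1 : ℂ) ^ (k + 1) * I) = -I := by
  induction r with
  | zero => simp
  | succ r ih =>
    rw [show 2 * (r + 1) + 1 = 2 * r + 1 + 1 + 1 by ring, Finset.prod_range_succ,
      Finset.prod_range_succ, ih, (show Odd (2 * r + 1 + 1 + 1) by grind).neg_one_pow,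
      (show Even (2 * r + 1 + 1) by grind).neg_one_pow]
    linear_combination I * I_sq

theorem neg_exp_pow_sub_pow {N k : ℕ} (hN : Odd N) (hk : k ≤ N) :
    (-exp (Real.pi * I / N)) ^ k - (-exp (Real.pi * I / N)) ^ (N - k) =
      (2 * Real.sin (Real.pi * k / N) : ℝ) * ((-1) ^ k * I) := by
  have hN0 : (N : ℂ) ≠ 0 := Nat.cast_ne_zero.2 hN.pos.ne'
  have hsign : (-1 : ℂ) ^ (N - k) = -(-1) ^ k := by
    rw [← neg_one_mul ((-1 : ℂ) ^ k), ← pow_succ',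
      neg_one_pow_congr (show Even (N - k) ↔ Even (k + 1) by grind)]
  have hexp : exp (Real.pi * I / N) ^ (N - k) = -exp (-(Real.pi * k / N) * I) := by
    rw [← exp_nat_mul, Nat.cast_sub hk, neg_eq_neg_one_mul (exp _), ← exp_pi_mul_I, ← exp_add]
    congr 1
    field_simp
    ring
  rw [neg_pow, neg_pow _ (N - k), hsign, hexp, ← exp_nat_mul,
    show k * (Real.pi * I / N) = Real.pi * k / N * I by ring]
  push_cast
  rw [Complex.sin]
  linear_combination (-1 : ℂ) ^ k *
    (exp (Real.pi * k / N * I) - exp (-(Real.pi * k / N) * I)) * I_sq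

theorem prod_neg_exp_pow_sub_pow {m : ℕ} (hm : Odd m) :
    ∃ y : ℝ, 0 < y ∧ ∏ k ∈ Finset.range m, ((-exp (Real.pi * I / (2 * m + 1 : ℕ))) ^ (k + 1) -
      (-exp (Real.pi * I / (2 * m + 1 : ℕ))) ^ (2 * m + 1 - (k + 1))) = -(y * I) := by
  refine ⟨∏ k ∈ Finset.range m, (2 * Real.sin (Real.pi * (k + 1 : ℕ) / (2 * m + 1 : ℕ))),
    Finset.prod_pos fun k hk ↦ mul_pos two_pos (Real.sin_pos_of_pos_of_lt_pi ?_ ?_), ?_⟩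
  · positivity
  · rw [div_lt_iff₀ (by positivity)]
    gcongr
    grind
  · obtain ⟨r, rfl⟩ := hm
    rw [Finset.prod_congr rfl fun k hk ↦ neg_exp_pow_sub_pow (by simp) (by grind),
      Finset.prod_mul_distrib, prod_neg_one_pow_mul_I, ofReal_prod, mul_neg]

theorem isPrimitiveRoot_neg_exp {N : ℕ} (hN : Odd N) :
    IsPrimitiveRoot (-exp (Real.pi * I / N)) N := by
  obtain ⟨m, rfl⟩ := hN
  convert isPrimitiveRoot_exp_of_coprime (m + 1) (2 * m + 1) (by simp) ?_ using 1
  · rw [neg_eq_neg_one_mul, ← exp_pi_mul_I, ← exp_add]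
    congr 1
    have : (2 * m + 1 : ℂ) ≠ 0 := by exact_mod_cast (2 * m).succ_ne_zero
    push_cast
    field_simp
    ring
  · rw [show 2 * m + 1 = m + (m + 1) by ring]
    simp

end GaussSumSign

section QuadraticCharacter

variable (p : ℕ) [Fact p.Prime]

/-- The quadratic character modulo `p` as a complex Dirichlet character. -/
noncomputable def complexQuadraticChar : DirichletCharacter ℂ p :=
  (quadraticChar (ZMod p)).ringHomComp (Int.castRingHom ℂ)

theorem complexQuadraticChar_apply (a : ZMod p) :
    complexQuadraticChar p a = (quadraticChar (ZMod p) a : ℂ) :=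
  rfl

theorem complexQuadraticChar_isQuadratic : (complexQuadraticChar p).IsQuadratic :=
  (quadraticChar_isQuadratic _).comp _

variable {p}

theorem complexQuadraticChar_ne_one (hp : p ≠ 2) : complexQuadraticChar p ≠ 1 :=
  (MulChar.ringHomComp_ne_one_iff (RingHom.injective_int _)).2
    (quadraticChar_ne_one (by rwa [ZMod.ringChar_zmod_n]))

theorem quadraticChar_neg_one_of_mod_four_eq_three (hp : p % 4 = 3) :
    quadraticChar (ZMod p) (-1) = -1 := by
  rw [quadraticChar_neg_one (by rw [ZMod.ringChar_zmod_n]; lia), ZMod.card,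
    ZMod.χ₄_nat_three_mod_four hp]

theorem gaussSum_complexQuadraticChar (hp : p % 4 = 3) :
    gaussSum (complexQuadraticChar p) ZMod.stdAddChar = Real.sqrt p * Complex.I := by
  obtain ⟨m, hpm⟩ : ∃ m, p = 2 * m + 1 := ⟨p / 2, by lia⟩
  have hm : Odd m := by grind
  set η : ℂ := -Complex.exp (Real.pi * Complex.I / p) with hη_def
  have hη : IsPrimitiveRoot η p := isPrimitiveRoot_neg_exp (hpm ▸ odd_two_mul_add_one m)
  set P : ℂ := ∏ k ∈ Finset.range m, (η ^ (k + 1) - η ^ (p - (k + 1))) with hP_def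
  have hP_sq : P ^ 2 = -p := by
    rw [hP_def, hpm, prod_pow_sub_pow_sq (hpm ▸ hη), hm.neg_one_pow]
    push_cast
    ring
  have hgauss_sq : gaussSum (complexQuadraticChar p) ZMod.stdAddChar ^ 2 = -p := by
    rw [gaussSum_sq (χ := complexQuadraticChar p) (complexQuadraticChar_ne_one (by lia))
      (complexQuadraticChar_isQuadratic p) (ZMod.isPrimitive_stdAddChar p),
      complexQuadraticChar_apply, quadraticChar_neg_one_of_mod_four_eq_three hp, ZMod.card]
    simp
  have hgauss_ne : gaussSum (complexQuadraticChar p) ZMod.stdAddChar ≠ P := by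
    intro h
    have hfactorial := factorial_sq_eq_neg_one_of_sum_eq_prod hm.pos.ne' hpm hη <| by
      rw [← hP_def, ← h, gaussSum]
      refine Finset.sum_congr rfl fun a _ ↦ ?_
      rw [complexQuadraticChar_apply, ZMod.stdAddChar_apply, ZMod.toCircle_apply, hη_def, pow_mul,
        neg_sq, ← pow_mul, ← Complex.exp_nat_mul]
      congr 2
      push_cast
      ring
    exact ZMod.exists_sq_eq_neg_one_iff.1 ⟨_, by rw [← hfactorial, sq]⟩ hp
  obtain ⟨y, hy, hPy⟩ := prod_neg_exp_pow_sub_pow hm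
  rw [← hpm, ← hη_def, ← hP_def] at hPy
  have hy_sq : y ^ 2 = p := by
    rw [hPy] at hP_sq
    have : (y : ℂ) ^ 2 = p := by linear_combination -hP_sq + (y : ℂ) ^ 2 * Complex.I_sq
    exact_mod_cast this
  rw [(sq_eq_sq_iff_eq_or_eq_neg.1 (hgauss_sq.trans hP_sq.symm)).resolve_left hgauss_ne, hPy,
    neg_neg, ← hy_sq, Real.sqrt_sq hy.le]

end QuadraticCharacter

section LogSeries

open Filter Topology Complex

theorem norm_sum_range_pow_le {K : Type*} [NormedField K] {z : K} (hz : ‖z‖ = 1)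
    (hz1 : z ≠ 1) (n : ℕ) :
    ‖∑ i ∈ Finset.range n, z ^ i‖ ≤ 2 / ‖z - 1‖ := by
  rw [geom_sum_eq hz1, norm_div]
  gcongr
  exact (norm_sub_le _ _).trans_eq (by rw [norm_pow, hz, one_pow, norm_one]; norm_num)

theorem one_sub_mem_slitPlane {z : ℂ} (hz : ‖z‖ ≤ 1) (hz1 : z ≠ 1) : 1 - z ∈ slitPlane := by
  rw [mem_slitPlane_iff, sub_re, one_re, sub_im, one_im, sub_pos, zero_sub, neg_ne_zero]
  by_contra! h
  refine hz1 (Complex.ext (le_antisymm ((re_le_norm z).trans hz) h.1) h.2)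

theorem tendsto_sum_pow_div {z : ℂ} (hz : ‖z‖ = 1) (hz1 : z ≠ 1) :
    Tendsto (fun N ↦ ∑ n ∈ Finset.range N, z ^ n / n) atTop (𝓝 (-log (1 - z))) := by
  have hcauchy : CauchySeq fun N ↦ ∑ n ∈ Finset.range N, z ^ n / n := by
    rw [← cauchySeq_shift 1]
    have hanti : Antitone fun n : ℕ ↦ 1 / ((n : ℝ) + 1) := fun _ _ h ↦ Nat.one_div_le_one_div h
    have hbound (n : ℕ) : ‖∑ i ∈ Finset.range n, z ^ (i + 1)‖ ≤ 2 / ‖z - 1‖ := by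
      simpa only [pow_succ', ← Finset.mul_sum, norm_mul, hz, one_mul] using
        norm_sum_range_pow_le hz hz1 n
    convert hanti.cauchySeq_series_mul_of_tendsto_zero_of_bounded
      tendsto_one_div_add_atTop_nhds_zero_nat hbound using 2 with N
    rw [Finset.sum_range_succ', Nat.cast_zero, div_zero, add_zero]
    refine Finset.sum_congr rfl fun n _ ↦ ?_
    rw [real_smul]
    push_cast
    ring
  obtain ⟨l, hl⟩ := cauchySeq_tendsto_of_complete hcauchy
  have habel := tendsto_map'_iff.1 (tendsto_tsum_powerSeries_nhdsWithin_lt hl)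
  have hlog : Tendsto (fun r : ℝ ↦ -log (1 - z * r)) (𝓝[<] 1) (𝓝 (-log (1 - z))) := by
    have hcont : ContinuousAt (fun r : ℝ ↦ -log (1 - z * r)) 1 :=
      ((by fun_prop : ContinuousAt (fun r : ℝ ↦ 1 - z * r) 1).clog
        (by simpa using one_sub_mem_slitPlane hz.le hz1)).neg
    simpa using hcont.tendsto.mono_left nhdsWithin_le_nhds
  suffices l = -log (1 - z) from this ▸ hl
  refine tendsto_nhds_unique_of_eventuallyEq habel hlog ?_
  filter_upwards [Ioo_mem_nhdsLT zero_lt_one] with r hr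
  have hnorm : ‖z * r‖ < 1 := by
    rw [norm_mul, hz, one_mul, norm_real, Real.norm_of_nonneg hr.1.le]
    exact hr.2
  rw [← (hasSum_taylorSeries_neg_log hnorm).tsum_eq]
  exact tsum_congr fun n ↦ by rw [mul_pow]; ring

theorem arg_one_sub_exp {t : ℝ} (h0 : 0 < t) (h1 : t < 1) :
    (1 - exp (2 * Real.pi * t * I)).arg = Real.pi * t - Real.pi / 2 := by
  have hπ := Real.pi_pos
  have hsin : 0 < 2 * Real.sin (Real.pi * t) :=
    mul_pos two_pos (Real.sin_pos_of_pos_of_lt_pi (by positivity) (by nlinarith))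
  rw [← arg_mul_cos_add_sin_mul_I hsin (θ := Real.pi * t - Real.pi / 2)
    ⟨by nlinarith, by nlinarith⟩]
  congr 1
  push_cast
  rw [cos_sub_pi_div_two, sin_sub_pi_div_two, exp_mul_I, mul_assoc 2, cos_two_mul, sin_two_mul]
  linear_combination (-2) * sin_sq_add_cos_sq (Real.pi * t : ℂ)

end LogSeries

section DirichletCharacter

open Filter Topology Complex

theorem sum_range_natCast_zmod {M : Type*} [AddCommMonoid M] {N : ℕ} [NeZero N] (f : ZMod N → M) :
    ∑ n ∈ Finset.range N, f n = ∑ a, f a :=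
  Finset.sum_nbij' (fun n ↦ (n : ZMod N)) ZMod.val (by simp) (by simp [ZMod.val_lt])
    (fun n hn ↦ ZMod.val_cast_of_lt (Finset.mem_range.1 hn)) (by simp) (by simp)

theorem isPrimitive_of_prime {R : Type*} [CommMonoidWithZero R] {p : ℕ} [Fact p.Prime]
    {χ : DirichletCharacter R p} (hχ : χ ≠ 1) : χ.IsPrimitive :=
  ((Nat.Prime.eq_one_or_self_of_dvd Fact.out _ χ.conductor_dvd_level).resolve_left
    fun h ↦ hχ (χ.eq_one_iff_conductor_eq_one.2 h))

variable {N : ℕ} [NeZero N]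

theorem norm_sum_range_character_le {F : Type*} [NormedField F] {χ : DirichletCharacter F N}
    (hχ : χ ≠ 1) (M : ℕ) : ‖∑ n ∈ Finset.range M, χ n‖ ≤ N := by
  have hperiodic : Function.Periodic (fun M ↦ ∑ n ∈ Finset.range M, χ n) N := fun M ↦ by
    simp only [Finset.sum_range_add, Nat.cast_add]
    rw [sum_range_natCast_zmod (fun a : ZMod N ↦ χ (M + a)),
      Fintype.sum_equiv (Equiv.addLeft (M : ZMod N)) (fun a ↦ χ (M + a)) χ fun _ ↦ rfl,
      MulChar.sum_eq_zero_of_ne_one hχ, add_zero]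
  rw [← hperiodic.map_mod_nat M]
  calc ‖∑ n ∈ Finset.range (M % N), χ n‖
      ≤ ∑ n ∈ Finset.range (M % N), 1 := norm_sum_le_of_le _ fun n _ ↦ χ.norm_le_one n
    _ ≤ N := by
        simpa using (Nat.mod_lt M (NeZero.pos N)).le

variable {χ : DirichletCharacter ℂ N}

theorem sum_mul_stdAddChar_pow (hχ : χ.IsPrimitive) (n : ℕ) :
    ∑ a, χ a * (ZMod.stdAddChar a : ℂ) ^ n = χ⁻¹ n * gaussSum χ ZMod.stdAddChar := by
  rw [← gaussSum_mulShift_of_isPrimitive _ hχ, gaussSum]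
  refine Finset.sum_congr rfl fun a _ ↦ ?_
  rw [AddChar.mulShift_apply, ← nsmul_eq_mul, AddChar.map_nsmul_eq_pow]

theorem tendsto_gaussSum_mul_sum_inv_div (hχ : χ.IsPrimitive) (hχ1 : χ ≠ 1) :
    Tendsto (fun M ↦ gaussSum χ ZMod.stdAddChar * ∑ n ∈ Finset.range M, χ⁻¹ n / n) atTop
      (𝓝 (-∑ a, χ a * log (1 - ZMod.stdAddChar a))) := by
  have hχ0 : χ 0 = 0 := χ.map_zero' fun hN ↦ hχ1 (by subst hN; exact χ.level_one)
  have hterm (a : ZMod N) :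
      Tendsto (fun M ↦ ∑ n ∈ Finset.range M, χ a * ((ZMod.stdAddChar a : ℂ) ^ n / n)) atTop
        (𝓝 (-(χ a * log (1 - ZMod.stdAddChar a)))) := by
    rcases eq_or_ne a 0 with rfl | ha
    · simp [hχ0]
    · simp only [← Finset.mul_sum, ← mul_neg]
      exact (tendsto_sum_pow_div (by simp) fun h ↦ ha (ZMod.injective_stdAddChar
        (h.trans (AddChar.map_zero_eq_one _).symm))).const_mul _
  rw [← Finset.sum_neg_distrib]
  refine (tendsto_finsetSum _ fun a _ ↦ hterm a).congr fun M ↦ ?_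
  rw [Finset.sum_comm, Finset.mul_sum]
  refine Finset.sum_congr rfl fun n _ ↦ ?_
  rw [← mul_div_assoc, mul_comm (gaussSum _ _), ← sum_mul_stdAddChar_pow hχ, Finset.sum_div]
  simp only [mul_div_assoc]

end DirichletCharacter

section SummationByParts

theorem norm_sum_Ico_smul_le {E : Type*} [SeminormedAddCommGroup E] [NormedSpace ℝ E]
    {w : ℕ → ℝ} {c : ℕ → E} {C : ℝ} {m n : ℕ} (hmn : m ≤ n) (hw : AntitoneOn w (Set.Ici m))
    (hwn : 0 ≤ w n) (hc : ∀ k, ‖∑ i ∈ Finset.range k, c i‖ ≤ C) :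
    ‖∑ i ∈ Finset.Ico m n, w i • c i‖ ≤ 2 * C * w m := by
  have hblock {k : ℕ} (hk : m ≤ k) : ‖∑ i ∈ Finset.Ico m k, c i‖ ≤ 2 * C := by
    rw [Finset.sum_Ico_eq_sub _ hk, two_mul]
    exact norm_sub_le_of_le (hc k) (hc m)
  have hparts : ‖∑ i ∈ Finset.Ico m n, w i • c i - w n • ∑ i ∈ Finset.Ico m n, c i‖ ≤
      2 * C * (w m - w n) := by
    clear hwn
    induction n, hmn using Nat.le_induction with
    | base => simp
    | succ k hk ih =>
      have hwk : 0 ≤ w k - w (k + 1) :=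
        sub_nonneg.2 (hw hk (Set.mem_Ici.2 (hk.trans k.le_succ)) k.le_succ)
      calc _ = ‖(∑ i ∈ Finset.Ico m k, w i • c i - w k • ∑ i ∈ Finset.Ico m k, c i) +
            (w k - w (k + 1)) • ∑ i ∈ Finset.Ico m (k + 1), c i‖ := by
            rw [Finset.sum_Ico_succ_top hk, Finset.sum_Ico_succ_top hk]
            congr 1
            module
        _ ≤ 2 * C * (w m - w k) + (w k - w (k + 1)) * (2 * C) := by
            refine norm_add_le_of_le ih ?_
            rw [norm_smul, Real.norm_of_nonneg hwk]
            gcongr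
            exact hblock (hk.trans k.le_succ)
        _ = 2 * C * (w m - w (k + 1)) := by ring
  calc ‖∑ i ∈ Finset.Ico m n, w i • c i‖
      ≤ w n * (2 * C) + 2 * C * (w m - w n) := by
        refine (norm_le_insert' _ _).trans (add_le_add ?_ hparts)
        rw [norm_smul, Real.norm_of_nonneg hwn]
        gcongr
        exact hblock hmn
    _ = 2 * C * w m := by ring

end SummationByParts

section NonnegativeAtOne

open Filter Topology

variable {N : ℕ} {χ : DirichletCharacter ℂ N}

open scoped ComplexOrder in
theorem sum_character_mul_floor_div_re_nonneg (hχ : χ ^ 2 = 1) (K : ℕ) :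
    0 ≤ (∑ n ∈ Finset.Ioc 0 K, χ n * (K / n : ℕ)).re := by
  have hconv : ∑ n ∈ Finset.Ioc 0 K, χ.zetaMul n = ∑ n ∈ Finset.Ioc 0 K, χ n * (K / n : ℕ) := by
    rw [DirichletCharacter.zetaMul, mul_comm, ArithmeticFunction.sum_Ioc_mul_zeta_eq_sum]
    refine Finset.sum_congr rfl fun n hn ↦ ?_
    simp [toArithmeticFunction, (Finset.mem_Ioc.1 hn).1.ne']
  rw [← hconv]
  exact (Complex.le_def.1 (Finset.sum_nonneg fun n _ ↦ χ.zetaMul_nonneg hχ n)).1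

variable [NeZero N]

-- With `K = M!` the quotients `K / n` for `n ≤ M` are exact; the remaining ones decrease in `n`.
theorem neg_le_re_sum_character_div (hχ : χ ^ 2 = 1) (hχ1 : χ ≠ 1) (M : ℕ) :
    -(2 * N / (M + 1 : ℝ)) ≤ (∑ n ∈ Finset.range (M + 1), χ n / n).re := by
  set K := M.factorial
  have hK : (0 : ℝ) < K := mod_cast M.factorial_pos
  have htail : ‖∑ n ∈ Finset.Ico (M + 1) (K + 1), χ n * (K / n : ℕ)‖ ≤
      2 * N * (K / (M + 1)) := by
    have habel := norm_sum_Ico_smul_le (w := fun n ↦ ((K / n : ℕ) : ℝ)) (c := fun n ↦ χ n)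
      (Nat.add_le_add_right M.self_le_factorial 1)
      (fun a ha b _ hab ↦ Nat.cast_le.2 (Nat.div_le_div_left hab (M.succ_pos.trans_le ha)))
      (Nat.cast_nonneg _) (norm_sum_range_character_le hχ1)
    simp only [Complex.real_smul, Complex.ofReal_natCast, mul_comm _ (χ _)] at habel
    refine habel.trans ?_
    gcongr
    exact_mod_cast Nat.cast_div_le
  have hhead : ∑ n ∈ Finset.Ico 1 (M + 1), χ n * (K / n : ℕ) =
      K * ∑ n ∈ Finset.range (M + 1), χ n / n := by
    rw [Finset.range_eq_Ico, Finset.sum_eq_sum_Ico_succ_bot M.succ_pos, Nat.cast_zero (R := ℂ),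
      div_zero, zero_add, Finset.mul_sum]
    refine Finset.sum_congr rfl fun n hn ↦ ?_
    rw [Finset.mem_Ico] at hn
    rw [Nat.cast_div (Nat.dvd_factorial hn.1 (Nat.le_of_lt_succ hn.2)) (mod_cast (by lia))]
    ring
  have hnonneg := sum_character_mul_floor_div_re_nonneg hχ K
  rw [show Finset.Ioc 0 K = Finset.Ico 1 (K + 1) by ext; grind,
    ← Finset.sum_Ico_consecutive _ (Nat.le_add_left 1 M)
      (Nat.add_le_add_right M.self_le_factorial 1), hhead, Complex.add_re,
    ← Complex.ofReal_natCast K, Complex.re_ofReal_mul] at hnonneg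
  have hre := (Complex.re_le_norm _).trans htail
  refine le_of_mul_le_mul_left ?_ hK
  linear_combination hnonneg + hre

theorem re_nonneg_of_tendsto_sum_character_div (hχ : χ ^ 2 = 1) (hχ1 : χ ≠ 1) {l : ℂ}
    (hl : Tendsto (fun M ↦ ∑ n ∈ Finset.range M, χ n / n) atTop (𝓝 l)) : 0 ≤ l.re := by
  have hlower : Tendsto (fun M : ℕ ↦ -(2 * N / (M + 1 : ℝ))) atTop (𝓝 0) := by
    simpa [div_eq_mul_inv] using
      (tendsto_one_div_add_atTop_nhds_zero_nat.const_mul (2 * N : ℝ)).neg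
  exact le_of_tendsto_of_tendsto' hlower
    ((Complex.continuous_re.tendsto l).comp (hl.comp (tendsto_add_atTop_nat 1)))
    (neg_le_re_sum_character_div hχ hχ1)

end NonnegativeAtOne

section ArgumentSum

open Filter Topology

variable {p : ℕ} [Fact p.Prime]

theorem arg_one_sub_stdAddChar {N : ℕ} [NeZero N] {a : ZMod N} (ha : a ≠ 0) :
    (1 - ZMod.stdAddChar a).arg = Real.pi / N * a.val - Real.pi / 2 := by
  have hN : (0 : ℝ) < N := mod_cast NeZero.pos N
  have hval : (0 : ℝ) < a.val := mod_cast ZMod.val_pos.2 ha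
  have harg := arg_one_sub_exp (div_pos hval hN) ((div_lt_one hN).2 (mod_cast a.val_lt))
  rw [ZMod.stdAddChar_apply, ZMod.toCircle_apply]
  convert harg using 1
  · push_cast
    ring_nf
  · ring

theorem sum_quadraticChar_mul_arg (hp : p ≠ 2) :
    ∑ a : ZMod p, (quadraticChar (ZMod p) a : ℝ) * (1 - ZMod.stdAddChar a).arg =
      Real.pi / p * ∑ a : ZMod p, (quadraticChar (ZMod p) a : ℝ) * a.val := by
  have hsum : ∑ a : ZMod p, (quadraticChar (ZMod p) a : ℝ) = 0 := by
    exact_mod_cast quadraticChar_sum_zero (F := ZMod p) (by rwa [ZMod.ringChar_zmod_n])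
  have hterm (a : ZMod p) : (quadraticChar (ZMod p) a : ℝ) * (1 - ZMod.stdAddChar a).arg =
      Real.pi / p * (quadraticChar (ZMod p) a * a.val) -
        Real.pi / 2 * quadraticChar (ZMod p) a := by
    rcases eq_or_ne a 0 with rfl | ha
    · simp
    · rw [arg_one_sub_stdAddChar ha]
      ring
  simp only [hterm, Finset.sum_sub_distrib, ← Finset.mul_sum, hsum, mul_zero, sub_zero]

theorem sum_quadraticChar_mul_val_nonpos (hp : p % 4 = 3) :
    ∑ a : ZMod p, quadraticChar (ZMod p) a * (a.val : ℤ) ≤ 0 := by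
  have hp2 : p ≠ 2 := by lia
  have hp0 : (0 : ℝ) < p := mod_cast (Fact.out : p.Prime).pos
  have hχ := complexQuadraticChar_ne_one hp2
  have hquad := complexQuadraticChar_isQuadratic p
  set L : ℂ := -∑ a, complexQuadraticChar p a * Complex.log (1 - ZMod.stdAddChar a) with hL
  set G : ℂ := Real.sqrt p * Complex.I with hG
  have hlim : Tendsto (fun M ↦ ∑ n ∈ Finset.range M, complexQuadraticChar p n / n) atTop
      (𝓝 (G⁻¹ * L)) := by
    have hGlim := tendsto_gaussSum_mul_sum_inv_div (isPrimitive_of_prime hχ) hχ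
    rw [hquad.inv, gaussSum_complexQuadraticChar hp, ← hG] at hGlim
    have hG0 : G ≠ 0 := by simp [hG, hp0.ne']
    simpa only [inv_mul_cancel_left₀ hG0] using hGlim.const_mul G⁻¹
  have hre := re_nonneg_of_tendsto_sum_character_div (MulChar.isQuadratic_iff_sq_eq_one.1 hquad)
    hχ hlim
  have hL_im : L.im = -(Real.pi / p * ∑ a : ZMod p, (quadraticChar (ZMod p) a : ℝ) * a.val) := by
    rw [← sum_quadraticChar_mul_arg hp2, hL, Complex.neg_im, Complex.im_sum]
    congr 1
    refine Finset.sum_congr rfl fun a _ ↦ ?_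
    rw [complexQuadraticChar_apply, ← Complex.ofReal_intCast, Complex.im_ofReal_mul,
      Complex.log_im]
  have hre_eq : (G⁻¹ * L).re = L.im / Real.sqrt p := by
    rw [hG, mul_inv, Complex.inv_I, ← Complex.ofReal_inv, mul_assoc, Complex.re_ofReal_mul,
      neg_mul, Complex.neg_re, Complex.I_mul_re, neg_neg, div_eq_inv_mul]
  rw [hre_eq, le_div_iff₀ (Real.sqrt_pos.2 hp0), zero_mul, hL_im, neg_nonneg] at hre
  exact_mod_cast nonpos_of_mul_nonpos_right hre (div_pos Real.pi_pos hp0)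

end ArgumentSum

section HalfSum

theorem sum_range_eq_sum_add_reflect {M : Type*} [AddCommMonoid M] {N m : ℕ} (hN : N = 2 * m + 1)
    {s : Finset ℕ} (hs : s ⊆ Finset.Ico 1 N) (hcard : s.card = m)
    (hadd : ∀ a ∈ s, ∀ b ∈ s, a + b ≠ N) (f : ℕ → M) :
    ∑ n ∈ Finset.range N, f n = f 0 + ∑ n ∈ s, (f n + f (N - n)) := by
  have hlt : ∀ n ∈ s, 1 ≤ n ∧ n < N := fun n hn ↦ Finset.mem_Ico.1 (hs hn)
  have hinj : Set.InjOn (N - ·) (s : Set ℕ) := fun a ha b hb hab ↦ by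
    have := hlt a ha
    have := hlt b hb
    simp only at hab
    lia
  have hdisj : Disjoint s (s.image (N - ·)) := by
    simp only [Finset.disjoint_left, Finset.mem_image, not_exists, not_and]
    intro a ha b hb hab
    have := hlt b hb
    exact hadd a ha b hb (by lia)
  have hunion : s ∪ s.image (N - ·) = Finset.Ico 1 N := by
    refine Finset.eq_of_subset_of_card_le (Finset.union_subset hs ?_) ?_
    · intro n hn
      obtain ⟨a, ha, rfl⟩ := Finset.mem_image.1 hn
      have := hlt a ha
      exact Finset.mem_Ico.2 (by lia)
    · rw [Finset.card_union_of_disjoint hdisj, Finset.card_image_of_injOn hinj, Nat.card_Ico]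
      lia
  rw [Finset.range_eq_Ico, Finset.sum_eq_sum_Ico_succ_bot (by lia), zero_add, ← hunion,
    Finset.sum_union hdisj, Finset.sum_image hinj, Finset.sum_add_distrib]

variable {R : Type*} [CommRing R] {N : ℕ} {χ : DirichletCharacter R N}

theorem map_natCast_sub (hχ : χ.Odd) {n : ℕ} (hn : n ≤ N) : χ (N - n : ℕ) = -χ n := by
  rw [Nat.cast_sub hn, ZMod.natCast_self, zero_sub, neg_eq_neg_one_mul, map_mul,
    show χ (-1) = -1 from hχ, neg_one_mul]

theorem map_two_mul_level_mul_half_sum_eq (hχ : χ.Odd) {m : ℕ} (hN : N = 2 * m + 1) :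
    χ 2 * (N * ∑ n ∈ Finset.Icc 1 m, χ n) = (1 - 2 * χ 2) * ∑ n ∈ Finset.range N, χ n * n := by
  have hreflect : ∑ n ∈ Finset.range N, χ n * n =
      2 * ∑ n ∈ Finset.Icc 1 m, χ n * n - N * ∑ n ∈ Finset.Icc 1 m, χ n := by
    rw [sum_range_eq_sum_add_reflect hN (s := Finset.Icc 1 m) (by grind) (by simp) (by grind),
      Nat.cast_zero (R := R), mul_zero, zero_add, Finset.mul_sum, Finset.mul_sum,
      ← Finset.sum_sub_distrib]
    refine Finset.sum_congr rfl fun n hn ↦ ?_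
    have hnN : n ≤ N := by grind
    rw [map_natCast_sub hχ hnN, Nat.cast_sub hnN]
    ring
  have heven : ∑ n ∈ Finset.range N, χ n * n =
      χ 2 * (4 * ∑ n ∈ Finset.Icc 1 m, χ n * n - N * ∑ n ∈ Finset.Icc 1 m, χ n) := by
    have hinj : Function.Injective (2 * · : ℕ → ℕ) := mul_right_injective₀ two_ne_zero
    rw [sum_range_eq_sum_add_reflect hN (s := (Finset.Icc 1 m).image (2 * ·)) (by grind)
      (by rw [Finset.card_image_of_injective _ hinj]; simp) (by grind),
      Finset.sum_image hinj.injOn, Nat.cast_zero (R := R), mul_zero, zero_add, Finset.mul_sum,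
      Finset.mul_sum, ← Finset.sum_sub_distrib, Finset.mul_sum]
    refine Finset.sum_congr rfl fun n hn ↦ ?_
    have hnN : 2 * n ≤ N := by grind
    rw [map_natCast_sub hχ hnN, Nat.cast_sub hnN, Nat.cast_mul, map_mul]
    push_cast
    ring
  linear_combination 2 * χ 2 * hreflect - heven

end HalfSum

section Counting

theorem sum_Icc_quadraticChar_nonneg {p m : ℕ} [Fact p.Prime] (hp : p % 4 = 3)
    (hm : p = 2 * m + 1) : 0 ≤ ∑ n ∈ Finset.Icc 1 m, quadraticChar (ZMod p) n := by
  have hp0 : (0 : ℤ) < p := mod_cast (Fact.out : p.Prime).pos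
  have hT : ∑ n ∈ Finset.range p, quadraticChar (ZMod p) n * (n : ℤ) ≤ 0 := by
    refine le_of_eq_of_le ?_ (sum_quadraticChar_mul_val_nonpos hp)
    rw [← sum_range_natCast_zmod]
    refine Finset.sum_congr rfl fun n hn ↦ ?_
    rw [ZMod.val_cast_of_lt (Finset.mem_range.1 hn)]
  have hidentity :=
    map_two_mul_level_mul_half_sum_eq (quadraticChar_neg_one_of_mod_four_eq_three hp) hm
  refine nonneg_of_mul_nonneg_right ?_ hp0
  have htwo : (2 : ZMod p) ≠ 0 := Ring.two_ne_zero (by rw [ZMod.ringChar_zmod_n]; lia)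
  rcases quadraticChar_dichotomy htwo with h | h <;> rw [h] at hidentity <;> linarith

theorem sum_quadraticChar_eq_card_sub_card {F ι : Type*} [Field F] [Fintype F] [DecidableEq F]
    {s : Finset ι} {f : ι → F} [DecidablePred fun i ↦ IsSquare (f i)] (hf : ∀ i ∈ s, f i ≠ 0) :
    ∑ i ∈ s, quadraticChar F (f i) =
      ((s.filter fun i ↦ IsSquare (f i)).card : ℤ) - (s.filter fun i ↦ ¬IsSquare (f i)).card := by
  have hsign : ∀ i ∈ s, quadraticChar F (f i) = if IsSquare (f i) then 1 else -1 := by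
    intro i hi
    split_ifs with h
    · exact (quadraticChar_one_iff_isSquare (hf i hi)).2 h
    · exact quadraticChar_neg_one_iff_not_isSquare.2 h
  rw [Finset.sum_congr rfl hsign, Finset.sum_ite, Finset.sum_const, Finset.sum_const,
    nsmul_one, smul_neg, nsmul_one, ← sub_eq_add_neg]

theorem exists_sq_modEq_iff_isSquare {N : ℕ} {y : ℤ} :
    (∃ x : ℤ, x ^ 2 ≡ y [ZMOD N]) ↔ IsSquare (y : ZMod N) := by
  simp only [← ZMod.intCast_eq_intCast_iff, Int.cast_pow, isSquare_iff_exists_sq,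
    ZMod.intCast_surjective.exists, eq_comm]

-- Filtering a `Finset ℕ` by a predicate on `ℤ` coerces the set to `Finset ℤ`, and the coercion
-- elaborates to this monadic bind.
open scoped Classical in
theorem card_filter_bind_pure_natCast (s : Finset ℕ) (Q : ℤ → Prop) [DecidablePred Q] :
    (((do let a ← s; pure (a : ℤ)) : Finset ℤ).filter Q).card =
      (s.filter fun n : ℕ ↦ Q n).card := by
  have himage : ((do let a ← s; pure (a : ℤ)) : Finset ℤ) = s.image (Nat.cast : ℕ → ℤ) := by
    ext z
    simp [eq_comm]
  rw [himage, Finset.filter_image, Finset.card_image_of_injective _ Nat.cast_injective]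

end Counting

end SmallResidues

open scoped Classical in
/-- For a prime `p ≡ 3 (mod 4)`, there are strictly more quadratic residues of `p`
in `[1, (p-1)/2]` than non-residues of `p` in `[1, (p-1)/2]`. -/
theorem small_residues_card_gt_small_nonresidues_card_of_prime_mod_four_eq_three
    (p : ℕ) (hp : p.Prime) (hmod : p % 4 = 3) :
    ((Finset.Icc 1 ((p - 1) / 2)).filter
        (fun y => ¬ ∃ x : ℤ, x ^ 2 ≡ (y : ℤ) [ZMOD (p : ℤ)])).card <
      ((Finset.Icc 1 ((p - 1) / 2)).filter
        (fun y => ∃ x : ℤ, x ^ 2 ≡ (y : ℤ) [ZMOD (p : ℤ)])).card := by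
  have : Fact p.Prime := ⟨hp⟩
  obtain ⟨m, hm⟩ : ∃ m, p = 2 * m + 1 := ⟨p / 2, by lia⟩
  have hunit : ∀ n ∈ Finset.Icc 1 m, (n : ZMod p) ≠ 0 := fun n hn ↦ by
    rw [Ne, ZMod.natCast_eq_zero_iff]
    exact Nat.not_dvd_of_pos_of_lt (by grind) (by grind)
  have hsum := SmallResidues.sum_Icc_quadraticChar_nonneg hmod hm
  rw [SmallResidues.sum_quadraticChar_eq_card_sub_card hunit] at hsum
  have hcard := Finset.card_filter_add_card_filter_not (s := Finset.Icc 1 m)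
    (fun n : ℕ ↦ IsSquare (n : ZMod p))
  rw [Nat.card_Icc] at hcard
  rw [show (p - 1) / 2 = m by lia, SmallResidues.card_filter_bind_pure_natCast,
    SmallResidues.card_filter_bind_pure_natCast]
  simp only [SmallResidues.exists_sq_modEq_iff_isSquare, Int.cast_natCast]
  lia
end

section
/- Let p be a prime with p ≡ 7 (mod 8). Then the sum of all non-residues of p in [1, p−1] is strictly greater than the sum of all quadratic residues of p in [1, p−1], i.e. ΣN > ΣR. -/
/-!
Let `χ` be the Legendre symbol modulo a prime `p ≡ 3 (mod 4)` and `τ` its Gauss sum. Fourier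
inversion gives `τ * L(1, χ) = ∑ j, χ j * Li₁(exp (2πi j / p))`, and
`Li₁(exp (2πi x)) = -log (1 - exp (2πi x))` has imaginary part `π (1 / 2 - x)` for `0 < x < 1`.
Comparing imaginary parts, `Im τ * L(1, χ) = -(π / p) * ∑ j, χ j * j`, so it remains to see that
both factors on the left are positive. The Euler product gives `L(s, χ) ≥ 0` for real `s > 1`,
hence `L(1, χ) > 0` because it does not vanish. The sign of `τ` is Gauss's theorem: `q`-binomial
coefficients at a `p`-th root of unity turn the quadratic sum into a product of sines.
-/

section GaussBinomial

/-- The Gaussian binomial coefficient `[m, j]` evaluated at `q`, through its Pascal recursion, so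
that it makes sense at roots of unity, where the quotient of `q`-factorials does not. -/
def gaussBinom {R : Type*} [CommRing R] (q : R) : ℕ → ℕ → R
  | _, 0 => 1
  | 0, _ + 1 => 0
  | m + 1, j + 1 => gaussBinom q m j + q ^ (j + 1) * gaussBinom q m (j + 1)

variable {R : Type*} [CommRing R] (q : R)

theorem gaussBinom_zero_right (m : ℕ) : gaussBinom q m 0 = 1 := by cases m <;> rfl

theorem gaussBinom_succ_succ (m j : ℕ) :
    gaussBinom q (m + 1) (j + 1) = gaussBinom q m j + q ^ (j + 1) * gaussBinom q m (j + 1) := rfl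

theorem gaussBinom_eq_zero_of_lt {m j : ℕ} (h : m < j) : gaussBinom q m j = 0 := by
  induction m generalizing j with
  | zero => obtain ⟨j, rfl⟩ := Nat.exists_eq_succ_of_ne_zero h.ne'; rfl
  | succ m ih =>
    obtain ⟨j, rfl⟩ := Nat.exists_eq_succ_of_ne_zero (Nat.ne_zero_of_lt h)
    rw [Nat.succ_eq_add_one, gaussBinom_succ_succ, ih (by omega), ih (by omega), mul_zero, add_zero]

theorem one_sub_pow_mul_gaussBinom_succ_succ (m j : ℕ) :
    (1 - q ^ (j + 1)) * gaussBinom q (m + 1) (j + 1) = (1 - q ^ (m + 1)) * gaussBinom q m j := by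
  induction m generalizing j with
  | zero => cases j <;> simp [gaussBinom]
  | succ m ih =>
    rw [gaussBinom_succ_succ q (m + 1)]
    cases j with
    | zero =>
      have absorption := ih 0
      simp only [gaussBinom_zero_right] at absorption ⊢
      linear_combination q * absorption
    | succ j =>
      linear_combination q ^ (j + 1 + 1) * ih (j + 1)
        - q * (1 - q ^ (m + 1)) * gaussBinom_succ_succ q m j + q * ih j

theorem pow_mul_one_sub_pow_mul_gaussBinom_succ (m j : ℕ) :
    q ^ j * (1 - q ^ (j + 1)) * gaussBinom q m (j + 1) = (q ^ j - q ^ m) * gaussBinom q m j := by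
  cases m with
  | zero => cases j <;> simp [gaussBinom]
  | succ m =>
    rw [mul_assoc, one_sub_pow_mul_gaussBinom_succ_succ]
    cases j with
    | zero => simp only [gaussBinom_zero_right, pow_zero, one_mul]
    | succ j =>
      linear_combination -(1 - q ^ (m + 1)) * gaussBinom_succ_succ q m j
        + one_sub_pow_mul_gaussBinom_succ_succ q m j

theorem alternating_sum_gaussBinom_add_two (m : ℕ) :
    ∑ j ∈ Finset.range (m + 3), (-1) ^ j * gaussBinom q (m + 2) j =
      (1 - q ^ (m + 1)) * ∑ j ∈ Finset.range (m + 1), (-1) ^ j * gaussBinom q m j := by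
  have pascal (j : ℕ) : (-1) ^ (j + 1) * gaussBinom q (m + 2) (j + 1) =
      (-1) ^ (j + 1) * q ^ (j + 1) * gaussBinom q (m + 1) (j + 1) -
        (-1) ^ j * gaussBinom q (m + 1) j := by
    rw [gaussBinom_succ_succ q (m + 1)]; ring
  have absorption (j : ℕ) : (1 - q ^ (m + 1)) * ((-1) ^ j * gaussBinom q m j) =
      (-1) ^ (j + 1) * q ^ (j + 1) * gaussBinom q (m + 1) (j + 1) -
        (-1) ^ (j + 1) * gaussBinom q (m + 1) (j + 1) := by
    linear_combination -(-1) ^ j * one_sub_pow_mul_gaussBinom_succ_succ q m j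
  rw [Finset.sum_range_succ', Finset.mul_sum]
  simp only [pascal, absorption, Finset.sum_sub_distrib]
  rw [Finset.sum_range_succ' (fun j => (-1) ^ j * gaussBinom q (m + 1) j),
    Finset.sum_range_succ _ (m + 1), gaussBinom_eq_zero_of_lt q (Nat.lt_succ_self (m + 1))]
  simp only [gaussBinom_zero_right]
  ring

theorem alternating_sum_gaussBinom_two_mul (n : ℕ) :
    ∑ j ∈ Finset.range (2 * n + 1), (-1) ^ j * gaussBinom q (2 * n) j =
      ∏ k ∈ Finset.range n, (1 - q ^ (2 * k + 1)) := by
  induction n with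
  | zero => simp [gaussBinom]
  | succ n ih =>
    rw [Finset.prod_range_succ_comm, ← ih, ← alternating_sum_gaussBinom_add_two]
    rfl

variable {q}

theorem neg_one_pow_mul_gaussBinom_of_isPrimitiveRoot [IsDomain R] {m j : ℕ} {z : R}
    (hq : IsPrimitiveRoot q (m + 1)) (hz : z ^ 2 * q = 1) (hj : j ≤ m) :
    (-1) ^ j * gaussBinom q m j = z ^ (j * (j + 1)) := by
  induction j with
  | zero => simp [gaussBinom_zero_right]
  | succ j ih =>
    have hne : q ^ (j + 1) ≠ 1 := hq.pow_ne_one_of_pos_of_lt j.succ_ne_zero (by omega)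
    have ratio : q ^ (j + 1) * gaussBinom q m (j + 1) = -gaussBinom q m j := by
      apply mul_left_cancel₀ (sub_ne_zero.2 hne.symm)
      linear_combination q * pow_mul_one_sub_pow_mul_gaussBinom_succ q m j
        - gaussBinom q m j * hq.pow_eq_one
    have inverse : (z ^ 2) ^ (j + 1) * q ^ (j + 1) = 1 := by rw [← mul_pow, hz, one_pow]
    calc (-1) ^ (j + 1) * gaussBinom q m (j + 1)
        = (z ^ 2) ^ (j + 1) * ((-1) ^ j * gaussBinom q m j) := by
          linear_combination (-1) ^ (j + 1) * (z ^ 2) ^ (j + 1) * ratio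
            - (-1) ^ (j + 1) * gaussBinom q m (j + 1) * inverse
      _ = z ^ ((j + 1) * (j + 1 + 1)) := by rw [ih (by omega), ← pow_mul, ← pow_add]; ring_nf

end GaussBinomial

section QuadraticSums

theorem sum_range_natCast_zmod {M : Type*} [AddCommMonoid M] (n : ℕ) [NeZero n] (f : ZMod n → M) :
    ∑ j ∈ Finset.range n, f j = ∑ x, f x :=
  Finset.sum_nbij' (fun j => (j : ZMod n)) ZMod.val (by simp)
    (fun x _ => Finset.mem_range.2 x.val_lt)
    (fun j hj => ZMod.val_cast_of_lt (Finset.mem_range.1 hj)) (by simp) (by simp)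

variable {R : Type*} [CommRing R] {m n : ℕ} {ψ : AddChar (ZMod n) R}

theorem isPrimitiveRoot_addChar_apply [NeZero n] (hψ : ψ.IsPrimitive) {a : ZMod n} (ha : IsUnit a) :
    IsPrimitiveRoot (ψ a) n := by
  refine ⟨by rw [← AddChar.map_nsmul_eq_pow]; simp, fun l hl => ?_⟩
  rwa [← AddChar.map_nsmul_eq_pow, hψ.zmod_char_eq_one_iff, nsmul_eq_mul, ha.mul_left_eq_zero,
    ZMod.natCast_eq_zero_iff] at hl

theorem two_mul_add_one_eq_zero_zmod (hn : n = 2 * m + 1) : (2 * m + 1 : ZMod n) = 0 := by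
  subst hn
  exact_mod_cast ZMod.natCast_self (2 * m + 1)

theorem sum_addChar_mul_add_one_eq_prod [NeZero n] [IsDomain R] (hψ : ψ.IsPrimitive)
    (hn : n = 2 * m + 1) :
    ∑ x, ψ (x * (x + 1)) = ∏ k ∈ Finset.range m, (1 - ψ (-(2 * (2 * k + 1)))) := by
  have unit_neg_two : IsUnit (-2 : ZMod n) :=
    IsUnit.of_mul_eq_one (m : ZMod n) (by linear_combination -two_mul_add_one_eq_zero_zmod hn)
  have hq : IsPrimitiveRoot (ψ (-2)) (2 * m + 1) := by
    convert isPrimitiveRoot_addChar_apply hψ unit_neg_two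
    exact hn.symm
  have hz : ψ 1 ^ 2 * ψ (-2) = 1 := by
    rw [← AddChar.map_nsmul_eq_pow, ← AddChar.map_add_eq_mul]
    simp
  calc ∑ x, ψ (x * (x + 1))
      = ∑ j ∈ Finset.range (2 * m + 1), ψ 1 ^ (j * (j + 1)) := by
        rw [← sum_range_natCast_zmod]
        refine Finset.sum_congr (congrArg Finset.range hn) fun j _ => ?_
        simp [← AddChar.map_nsmul_eq_pow]
    _ = ∑ j ∈ Finset.range (2 * m + 1), (-1) ^ j * gaussBinom (ψ (-2)) (2 * m) j := by
        refine Finset.sum_congr rfl fun j hj => ?_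
        rw [neg_one_pow_mul_gaussBinom_of_isPrimitiveRoot hq hz (Finset.mem_range_succ_iff.1 hj)]
    _ = ∏ k ∈ Finset.range m, (1 - ψ (-(2 * (2 * k + 1)))) := by
        rw [alternating_sum_gaussBinom_two_mul]
        refine Finset.prod_congr rfl fun k _ => ?_
        rw [← AddChar.map_nsmul_eq_pow]
        congr 2
        simp [mul_comm]

theorem sum_addChar_sq_eq_prod [NeZero n] [IsDomain R] (hψ : ψ.IsPrimitive) (hn : n = 2 * m + 1) :
    ∑ x, ψ (x ^ 2) =
      ∏ k ∈ Finset.range m, (ψ (2 * k + 1) - ψ (-(2 * k + 1))) := by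
  have prod_odd : ∏ k ∈ Finset.range m, ψ (2 * k + 1) = ψ (m ^ 2) := by
    refine Finset.prod_range_induction _ (fun m => ψ (m ^ 2)) (by simp) m fun k _ => ?_
    rw [← AddChar.map_add_eq_mul]
    congr 1
    push_cast
    ring
  calc ∑ x, ψ (x ^ 2) = ∑ x, ψ ((x + (m + 1)) ^ 2) :=
        (Equiv.sum_comp (Equiv.addRight (m + 1 : ZMod n)) fun x => ψ (x ^ 2)).symm
    _ = ψ (m ^ 2) * ∑ x, ψ (x * (x + 1)) := by
        rw [Finset.mul_sum]
        refine Finset.sum_congr rfl fun x _ => ?_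
        rw [← AddChar.map_add_eq_mul]
        congr 1
        linear_combination (x + 1) * two_mul_add_one_eq_zero_zmod hn
    _ = ∏ k ∈ Finset.range m, ψ (2 * k + 1) * (1 - ψ (-(2 * (2 * k + 1)))) := by
        rw [sum_addChar_mul_add_one_eq_prod hψ hn, ← prod_odd, Finset.prod_mul_distrib]
    _ = ∏ k ∈ Finset.range m, (ψ (2 * k + 1) - ψ (-(2 * k + 1))) := by
        refine Finset.prod_congr rfl fun k _ => ?_
        rw [mul_sub, mul_one, ← AddChar.map_add_eq_mul]
        ring_nf

end QuadraticSums

section GaussSumSign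

open Complex

theorem neg_one_pow_mul_prod_sin_odd_pos (r : ℕ) :
    0 < (-1) ^ r * ∏ k ∈ Finset.range (2 * r + 1),
      Real.sin (2 * Real.pi * (2 * k + 1) / (4 * r + 3)) := by
  have hden : (0 : ℝ) < 4 * r + 3 := by positivity
  have sin_pos : ∀ k ∈ Finset.range (r + 1),
      0 < Real.sin (2 * Real.pi * (2 * k + 1) / (4 * r + 3)) := fun k hk => by
    have hk : (k : ℝ) ≤ r := by exact_mod_cast Finset.mem_range_succ_iff.1 hk
    refine Real.sin_pos_of_pos_of_lt_pi (by positivity) ?_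
    rw [div_lt_iff₀ hden]
    nlinarith [Real.pi_pos]
  have sin_neg : ∀ i ∈ Finset.range r,
      0 < -Real.sin (2 * Real.pi * (2 * ↑(r + 1 + i) + 1) / (4 * r + 3)) := fun i hi => by
    have hi : (i : ℝ) + 1 ≤ r := by exact_mod_cast Finset.mem_range.1 hi
    rw [← Real.sin_sub_pi]
    push_cast
    refine Real.sin_pos_of_pos_of_lt_pi ?_ ?_
    · rw [sub_pos, lt_div_iff₀ hden]
      nlinarith [Real.pi_pos, i.cast_nonneg (α := ℝ)]
    · rw [sub_lt_iff_lt_add, div_lt_iff₀ hden]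
      nlinarith [Real.pi_pos]
  have := mul_pos (Finset.prod_pos sin_pos) (Finset.prod_pos sin_neg)
  rwa [Finset.prod_neg, Finset.card_range, mul_left_comm, ← Finset.prod_range_add,
    show r + 1 + r = 2 * r + 1 by ring] at this

theorem stdAddChar_sub_stdAddChar_neg {n : ℕ} [NeZero n] (j : ℤ) :
    ZMod.stdAddChar (j : ZMod n) - ZMod.stdAddChar (-j : ZMod n) =
      (2 * I) * (Real.sin (2 * Real.pi * j / n) : ℂ) := by
  rw [← Int.cast_neg, ZMod.stdAddChar_coe, ZMod.stdAddChar_coe, ofReal_sin, Complex.sin]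
  push_cast
  ring_nf
  simp only [I_sq]
  ring

theorem im_sum_stdAddChar_sq_pos {n : ℕ} [NeZero n] (hn : n % 4 = 3) :
    0 < (∑ x : ZMod n, ZMod.stdAddChar (x ^ 2)).im := by
  obtain ⟨r, rfl⟩ : ∃ r, n = 4 * r + 3 := ⟨n / 4, by omega⟩
  have factor (k : ℕ) : ZMod.stdAddChar (2 * k + 1 : ZMod (4 * r + 3)) -
      ZMod.stdAddChar (-(2 * k + 1) : ZMod (4 * r + 3)) =
        2 * I * (Real.sin (2 * Real.pi * (2 * k + 1) / (4 * r + 3)) : ℂ) := by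
    exact_mod_cast stdAddChar_sub_stdAddChar_neg (n := 4 * r + 3) (2 * k + 1)
  have two_I_pow : (2 * I) ^ (2 * r + 1) = ((2 ^ (2 * r + 1) * (-1) ^ r : ℝ) : ℂ) * I := by
    rw [mul_pow, pow_succ I, pow_mul I, I_sq]
    push_cast
    ring
  rw [sum_addChar_sq_eq_prod (ZMod.isPrimitive_stdAddChar _) (m := 2 * r + 1) (by ring),
    Finset.prod_congr rfl fun k _ => factor k, Finset.prod_mul_distrib, Finset.prod_const,
    Finset.card_range, two_I_pow, ← ofReal_prod, mul_right_comm, ← ofReal_mul, im_ofReal_mul,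
    I_im, mul_one, mul_assoc]
  exact mul_pos (by positivity) (neg_one_pow_mul_prod_sin_odd_pos r)

variable {F : Type*} [Field F] [Fintype F] [DecidableEq F] {R : Type*} [CommRing R] [IsDomain R]

theorem sum_addChar_sq_eq_gaussSum_quadraticChar (hF : ringChar F ≠ 2) {ψ : AddChar F R}
    (hψ : ψ ≠ 1) :
    ∑ x, ψ (x ^ 2) = gaussSum ((quadraticChar F).ringHomComp (Int.castRingHom R)) ψ := by
  have sqrts (a : F) : (Finset.univ.filter fun x => x ^ 2 = a).card = quadraticChar F a + 1 := by
    rw [← quadraticChar_card_sqrts hF, Set.toFinset_ofPred]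
  calc ∑ x, ψ (x ^ 2) = ∑ a, ((quadraticChar F a : R) + 1) * ψ a := by
        rw [← Finset.sum_fiberwise' Finset.univ (fun x : F => x ^ 2) ψ]
        refine Finset.sum_congr rfl fun a _ => ?_
        rw [Finset.sum_const, nsmul_eq_mul]
        congr 1
        exact_mod_cast congrArg (Int.cast (R := R)) (sqrts a)
    _ = gaussSum ((quadraticChar F).ringHomComp (Int.castRingHom R)) ψ := by
        simp only [add_mul, one_mul, Finset.sum_add_distrib, AddChar.sum_eq_zero_of_ne_one hψ,
          add_zero]
        rfl

end GaussSumSign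

section ExpZeta

open Complex Filter Topology Set Asymptotics MeasureTheory

theorem one_sub_mem_slitPlane_of_norm_le_one {z : ℂ} (hz : ‖z‖ ≤ 1) (hz1 : z ≠ 1) :
    1 - z ∈ slitPlane := by
  refine Or.inl (sub_pos.2 (lt_of_le_of_ne ((re_le_norm z).trans hz) fun h => hz1 ?_))
  have hnorm : ‖z‖ = 1 := le_antisymm hz (by simpa [h] using re_le_norm z)
  exact Complex.ext h (abs_re_eq_norm.1 (by rw [h, one_re, hnorm, abs_one]))

/-- The integrand of the Bose–Einstein integral: its Mellin transform is `Γ(s) Liₛ(w)`. -/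
noncomputable def boseKernel (w : ℂ) (t : ℝ) : ℂ :=
  w * Real.exp (-t) / (1 - w * Real.exp (-t))

variable {w : ℂ}

theorem norm_mul_exp_neg_lt_one (hw : ‖w‖ ≤ 1) {t : ℝ} (ht : 0 < t) :
    ‖w * Real.exp (-t)‖ < 1 := by
  rw [norm_mul, norm_real, Real.norm_eq_abs, Real.abs_exp]
  exact mul_lt_one_of_nonneg_of_lt_one_right hw (Real.exp_nonneg _)
    (Real.exp_lt_one_iff.2 (neg_lt_zero.2 ht))

theorem hasSum_boseKernel (hw : ‖w‖ ≤ 1) {t : ℝ} (ht : 0 < t) :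
    HasSum (fun n : ℕ => w ^ (n + 1) * Real.exp (-(n + 1 : ℕ) * t)) (boseKernel w t) := by
  have := (hasSum_geometric_of_norm_lt_one (norm_mul_exp_neg_lt_one hw ht)).mul_left
    (w * Real.exp (-t))
  refine this.congr_fun fun n => ?_
  rw [← pow_succ', mul_pow, ← ofReal_pow, ← Real.exp_nat_mul]
  congr 3
  push_cast; ring

theorem one_sub_mul_exp_neg_mem_slitPlane (hw : ‖w‖ ≤ 1) (hw1 : w ≠ 1) {t : ℝ} (ht : 0 ≤ t) :
    1 - w * Real.exp (-t) ∈ slitPlane := by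
  obtain rfl | ht := ht.eq_or_lt
  · simpa using one_sub_mem_slitPlane_of_norm_le_one hw hw1
  · rw [sub_eq_add_neg]
    exact mem_slitPlane_of_norm_lt_one (by rw [norm_neg]; exact norm_mul_exp_neg_lt_one hw ht)

theorem continuousOn_boseKernel (hw : ‖w‖ ≤ 1) (hw1 : w ≠ 1) :
    ContinuousOn (boseKernel w) (Ici 0) := by
  unfold boseKernel
  exact ContinuousOn.div (by fun_prop) (by fun_prop)
    fun t ht => slitPlane_ne_zero (one_sub_mul_exp_neg_mem_slitPlane hw hw1 ht)

theorem tendsto_one_sub_mul_exp_neg_atTop (w : ℂ) :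
    Tendsto (fun t : ℝ => 1 - w * Real.exp (-t)) atTop (𝓝 1) := by
  have : Tendsto (fun t : ℝ => (Real.exp (-t) : ℂ)) atTop (𝓝 0) :=
    (continuous_ofReal.tendsto' 0 0 ofReal_zero).comp Real.tendsto_exp_neg_atTop_nhds_zero
  simpa using (this.const_mul w).const_sub 1

theorem boseKernel_isBigO_atTop (w : ℂ) :
    boseKernel w =O[atTop] fun t => Real.exp (-1 * t) := by
  have h1 : (fun t : ℝ => w * Real.exp (-t)) =O[atTop] fun t => Real.exp (-1 * t) := by
    simp only [neg_one_mul]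
    exact (isBigO_ofReal_left.2 (isBigO_refl _ _)).const_mul_left w
  have h2 := ((tendsto_one_sub_mul_exp_neg_atTop w).inv₀ one_ne_zero).isBigO_one ℝ
  exact (h1.mul h2).congr (fun t => (div_eq_mul_inv _ _).symm) fun t => mul_one _

theorem boseKernel_isBigO_nhdsGT_zero (hw : ‖w‖ ≤ 1) (hw1 : w ≠ 1) :
    boseKernel w =O[𝓝[>] 0] fun t : ℝ => t ^ (-(0 : ℝ)) := by
  have := ((continuousOn_boseKernel hw hw1 0 self_mem_Ici).mono Ioi_subset_Ici_self)
  simpa using this.tendsto.isBigO_one ℝ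

theorem locallyIntegrableOn_boseKernel (hw : ‖w‖ ≤ 1) (hw1 : w ≠ 1) :
    LocallyIntegrableOn (boseKernel w) (Ioi 0) :=
  ((continuousOn_boseKernel hw hw1).mono Ioi_subset_Ici_self).locallyIntegrableOn measurableSet_Ioi

theorem differentiableAt_mellin_boseKernel (hw : ‖w‖ ≤ 1) (hw1 : w ≠ 1) {s : ℂ} (hs : 0 < s.re) :
    DifferentiableAt ℂ (mellin (boseKernel w)) s :=
  mellin_differentiableAt_of_isBigO_rpow_exp one_pos (locallyIntegrableOn_boseKernel hw hw1)
    (boseKernel_isBigO_atTop w) (boseKernel_isBigO_nhdsGT_zero hw hw1) hs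

theorem mellin_boseKernel_one (hw : ‖w‖ ≤ 1) (hw1 : w ≠ 1) :
    mellin (boseKernel w) 1 = -log (1 - w) := by
  have integrable : IntegrableOn (boseKernel w) (Ioi 0) := by
    simpa [MellinConvergent] using mellinConvergent_of_isBigO_rpow_exp one_pos
      (locallyIntegrableOn_boseKernel hw hw1) (boseKernel_isBigO_atTop w)
      (boseKernel_isBigO_nhdsGT_zero hw hw1) (s := 1) (by simp)
  have primitive (t : ℝ) (ht : t ∈ Ici 0) :
      HasDerivAt (fun t : ℝ => log (1 - w * Real.exp (-t))) (boseKernel w t) t := by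
    have exp_deriv : HasDerivAt (fun t : ℝ => Real.exp (-t)) (-Real.exp (-t)) t := by
      simpa using (hasDerivAt_neg t).exp
    refine (((exp_deriv.ofReal_comp.const_mul w).const_sub 1).clog_real
      (one_sub_mul_exp_neg_mem_slitPlane hw hw1 ht)).congr_deriv ?_
    rw [ofReal_neg, mul_neg, neg_neg, boseKernel]
  have limit : Tendsto (fun t : ℝ => log (1 - w * Real.exp (-t))) atTop (𝓝 0) := by
    simpa using (tendsto_one_sub_mul_exp_neg_atTop w).clog one_mem_slitPlane
  simpa [mellin] using integral_Ioi_of_hasDerivAt_of_tendsto' primitive integrable limit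

theorem hasSum_mellin_boseKernel {s : ℂ} (hw : ‖w‖ ≤ 1) (hs : 1 < s.re) :
    HasSum (fun n : ℕ => Gamma s * w ^ (n + 1) / ((n + 1 : ℕ) : ℝ) ^ s)
      (mellin (boseKernel w) s) := by
  refine hasSum_mellin (fun n => Or.inr (by positivity)) (by linarith)
    (fun t ht => hasSum_boseKernel hw ht) ?_
  have majorant : Summable fun n : ℕ => 1 / ((n + 1 : ℕ) : ℝ) ^ s.re :=
    (summable_nat_add_iff 1).2 (Real.summable_one_div_nat_rpow.2 hs)
  refine majorant.of_nonneg_of_le (fun n => by positivity) fun n => ?_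
  gcongr
  rw [norm_pow]
  exact pow_le_one₀ (norm_nonneg w) hw

theorem Gamma_mul_expZeta_eq_mellin_boseKernel (x : ℝ) {s : ℂ} (hs : 1 < s.re) :
    Gamma s * HurwitzZeta.expZeta x s = mellin (boseKernel (exp (2 * Real.pi * I * x))) s := by
  have hs0 : s ≠ 0 := by rintro rfl; simp at hs; linarith
  have hnorm : ‖exp (2 * Real.pi * I * x)‖ ≤ 1 := by simp [norm_exp]
  have series := (hasSum_nat_add_iff' 1).2 (HurwitzZeta.hasSum_expZeta_of_one_lt_re x hs)
  refine HasSum.unique ?_ (hasSum_mellin_boseKernel hnorm hs)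
  simp only [Finset.range_one, Finset.sum_singleton, Nat.cast_zero, zero_cpow hs0, div_zero,
    sub_zero] at series
  refine (series.mul_left (Gamma s)).congr_fun fun n => ?_
  rw [← exp_nat_mul, mul_div_assoc, ofReal_natCast, mul_comm ((n + 1 : ℕ) : ℂ) (_ * _)]

theorem expZeta_one_eq_neg_log {x : ℝ} (hx : (x : UnitAddCircle) ≠ 0) :
    HurwitzZeta.expZeta x 1 = -log (1 - exp (2 * Real.pi * I * x)) := by
  have hnorm : ‖exp (2 * Real.pi * I * x)‖ ≤ 1 := by simp [norm_exp]
  have hne : exp (2 * Real.pi * I * x) ≠ 1 := fun h => hx <| by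
    obtain ⟨n, hn⟩ := exp_eq_one_iff.1 h
    have hxn : (x : ℂ) = n := mul_left_cancel₀ two_pi_I_ne_zero (by rw [hn, mul_comm])
    refine (AddCircle.coe_eq_zero_iff 1).2 ⟨n, ?_⟩
    rw [zsmul_one]
    exact_mod_cast hxn.symm
  have to_one : Tendsto ((↑) : ℝ → ℂ) (𝓝[>] 1) (𝓝 1) :=
    (continuous_ofReal.tendsto' 1 1 ofReal_one).mono_left nhdsWithin_le_nhds
  have lhs : Tendsto (fun s : ℂ => Gamma s * HurwitzZeta.expZeta x s) (𝓝 1)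
      (𝓝 (HurwitzZeta.expZeta x 1)) := by
    simpa using differentiableAt_Gamma_one.continuousAt.tendsto.mul
      (HurwitzZeta.differentiable_expZeta_of_ne_zero hx 1).continuousAt.tendsto
  have rhs := (differentiableAt_mellin_boseKernel hnorm hne (s := 1) (by simp)).continuousAt.tendsto
  rw [← mellin_boseKernel_one hnorm hne]
  refine tendsto_nhds_unique_of_eventuallyEq (lhs.comp to_one) (rhs.comp to_one) ?_
  filter_upwards [self_mem_nhdsWithin] with s hs
  exact Gamma_mul_expZeta_eq_mellin_boseKernel x (by simpa using hs)

theorem im_neg_log_one_sub_exp {x : ℝ} (hx0 : 0 < x) (hx1 : x < 1) :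
    (-log (1 - exp (2 * Real.pi * I * x))).im = Real.pi * (1 / 2 - x) := by
  have hsin : 0 < Real.sin (Real.pi * x) :=
    Real.sin_pos_of_pos_of_lt_pi (by positivity) (mul_lt_of_lt_one_right Real.pi_pos hx1)
  have polar : 1 - exp (2 * Real.pi * I * x) = ((2 * Real.sin (Real.pi * x) : ℝ) : ℂ) *
      (cos (Real.pi * x - Real.pi / 2 : ℝ) + sin (Real.pi * x - Real.pi / 2 : ℝ) * I) := by
    rw [← ofReal_cos, ← ofReal_sin, Real.cos_sub_pi_div_two, Real.sin_sub_pi_div_two,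
      show 2 * Real.pi * I * x = (2 * (Real.pi * x) : ℝ) * I by push_cast; ring, exp_mul_I,
      ← ofReal_cos, ← ofReal_sin, Real.cos_two_mul', Real.sin_two_mul]
    have := congrArg ofReal (Real.sin_sq_add_cos_sq (Real.pi * x))
    push_cast at this ⊢
    linear_combination -this
  rw [neg_im, log_im, polar, arg_mul_cos_add_sin_mul_I (by positivity)
    ⟨by nlinarith [Real.pi_pos], by nlinarith [Real.pi_pos]⟩]
  ring

end ExpZeta

section DirichletLFunctionAtOne

open DirichletCharacter

open scoped ComplexOrder

variable {N : ℕ} [NeZero N] {χ : DirichletCharacter ℂ N}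

theorem gaussSum_mul_LFunction_inv (hχ : χ.IsPrimitive) {s : ℂ} (hs : χ 0 = 0 ∨ s ≠ 1) :
    gaussSum χ ZMod.stdAddChar * LFunction χ⁻¹ s =
      ∑ j, χ j * HurwitzZeta.expZeta (ZMod.toAddCircle j) s := by
  have sign_sq : χ (-1) * χ (-1) = 1 := by rw [← map_mul, neg_one_mul, neg_neg, map_one]
  have inv_sign : χ⁻¹ (-1) = χ (-1) := by
    rw [MulChar.inv_apply_eq_inv', inv_eq_of_mul_eq_one_right sign_sq]
  have fourier : ZMod.dft (χ ·) = fun k => χ (-1) * gaussSum χ ZMod.stdAddChar * χ⁻¹ k := by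
    ext k
    rw [hχ.fourierTransform_eq_inv_mul_gaussSum, ← neg_one_mul k, map_mul, inv_sign]
    ring
  have linear : ZMod.LFunction (ZMod.dft (χ ·)) s =
      χ (-1) * (gaussSum χ ZMod.stdAddChar * LFunction χ⁻¹ s) := by
    simp only [fourier, LFunction, ZMod.LFunction, mul_assoc, ← Finset.mul_sum]
    ring
  have reindexed : ∑ j, χ j * HurwitzZeta.expZeta (ZMod.toAddCircle (-j)) s =
      χ (-1) * ∑ j, χ j * HurwitzZeta.expZeta (ZMod.toAddCircle j) s := by
    rw [Finset.mul_sum, ← Equiv.sum_comp (Equiv.neg _)]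
    refine Finset.sum_congr rfl fun j _ => ?_
    rw [Equiv.neg_apply, neg_neg, ← neg_one_mul j, map_mul, mul_assoc]
  refine mul_left_cancel₀ (left_ne_zero_of_mul_eq_one sign_sq) ?_
  rw [← linear, ← reindexed, ZMod.LFunction_dft _ hs]

theorem LFunction_nonneg_of_isQuadratic (hχ : χ.IsQuadratic) {s : ℝ} (hs : 1 < s) :
    0 ≤ LFunction χ s := by
  have hs' : 1 < (s : ℂ).re := hs
  rw [LFunction_eq_LSeries χ hs']
  refine ge_of_tendsto' (LSeries_eulerProduct χ hs') fun n => Finset.prod_nonneg fun q hq => ?_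
  have hq : 1 ≤ (q : ℝ) := by exact_mod_cast (Nat.prime_of_mem_primesBelow hq).one_le
  have hpow : (q : ℝ) ^ (-s) ≤ 1 := Real.rpow_le_one_of_one_le_of_nonpos hq (by linarith)
  have cast_pow : (q : ℂ) ^ (-s : ℂ) = ((q : ℝ) ^ (-s) : ℝ) := by
    rw [Complex.ofReal_cpow (by positivity), Complex.ofReal_natCast, Complex.ofReal_neg]
  rw [cast_pow]
  rcases hχ q with h | h | h <;> rw [h]
  · simp
  · rw [one_mul]
    exact_mod_cast inv_nonneg.2 (sub_nonneg.2 hpow)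
  · rw [neg_one_mul, sub_neg_eq_add]
    exact_mod_cast inv_nonneg.2 (by positivity : 0 ≤ 1 + (q : ℝ) ^ (-s))

theorem LFunction_one_pos_of_isQuadratic (hχ : χ.IsQuadratic) (hχ1 : χ ≠ 1) :
    0 < LFunction χ 1 := by
  have limit : Filter.Tendsto (fun s : ℝ => LFunction χ s) (nhdsWithin 1 (Set.Ioi 1))
      (nhds (LFunction χ 1)) :=
    (((differentiable_LFunction hχ1).continuous.comp Complex.continuous_ofReal).tendsto' 1 _
      (by simp)).mono_left nhdsWithin_le_nhds
  refine lt_of_le_of_ne ?_ (LFunction_apply_one_ne_zero hχ1).symm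
  refine ge_of_tendsto limit ?_
  filter_upwards [self_mem_nhdsWithin] with s hs using LFunction_nonneg_of_isQuadratic hχ hs

theorem im_gaussSum_mul_LFunction_one (hχ : χ.IsPrimitive) (hχ2 : χ.IsQuadratic) (hχ1 : χ ≠ 1) :
    (gaussSum χ ZMod.stdAddChar * LFunction χ 1).im =
      -(Real.pi / N) * ∑ j, (χ j).re * j.val := by
  have χ_zero : χ 0 = 0 := χ.map_zero' fun h => hχ1 (level_one' χ h)
  have χ_im (j : ZMod N) : (χ j).im = 0 := by
    rcases hχ2 j with h | h | h <;> simp [h]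
  have sum_re : ∑ j, (χ j).re = 0 := by
    rw [← Complex.re_sum, MulChar.sum_eq_zero_of_ne_one hχ1, Complex.zero_re]
  have term (j : ZMod N) : (χ j * HurwitzZeta.expZeta (ZMod.toAddCircle j) 1).im =
      Real.pi / 2 * (χ j).re - Real.pi / N * ((χ j).re * j.val) := by
    obtain rfl | hj := eq_or_ne j 0
    · simp [χ_zero]
    have val_pos : 0 < (j.val : ℝ) := by exact_mod_cast ZMod.val_pos.2 hj
    have val_lt : (j.val : ℝ) < N := by exact_mod_cast j.val_lt
    have hN : (0 : ℝ) < N := val_pos.trans val_lt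
    have hj' := (ZMod.toAddCircle_eq_zero (j := j)).not.2 hj
    rw [ZMod.toAddCircle_apply] at hj' ⊢
    rw [expZeta_one_eq_neg_log hj', Complex.mul_im, χ_im, zero_mul, add_zero,
      im_neg_log_one_sub_exp (div_pos val_pos hN) ((div_lt_one hN).2 val_lt)]
    ring
  have formula := gaussSum_mul_LFunction_inv hχ (s := 1) (Or.inl χ_zero)
  rw [hχ2.inv] at formula
  rw [formula, Complex.im_sum, Finset.sum_congr rfl fun j _ => term j, Finset.sum_sub_distrib,
    ← Finset.mul_sum, ← Finset.mul_sum, sum_re, mul_zero, zero_sub, neg_mul]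

end DirichletLFunctionAtOne

section QuadraticCharacterModPrime

/-- The Legendre symbol modulo `p` as a Dirichlet character with complex values. -/
noncomputable abbrev legendreDirichletCharacter (p : ℕ) [Fact p.Prime] : DirichletCharacter ℂ p :=
  (quadraticChar (ZMod p)).ringHomComp (Int.castRingHom ℂ)

variable {p : ℕ} [Fact p.Prime]

theorem isPrimitive_of_ne_one_of_prime_level {R : Type*} [CommMonoidWithZero R]
    {χ : DirichletCharacter R p} (hχ : χ ≠ 1) : χ.IsPrimitive :=
  ((Fact.out : p.Prime).eq_one_or_self_of_dvd _ χ.conductor_dvd_level).resolve_left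
    fun h => hχ (χ.eq_one_iff_conductor_eq_one.2 h)

theorem isQuadratic_legendreDirichletCharacter : (legendreDirichletCharacter p).IsQuadratic :=
  (quadraticChar_isQuadratic _).comp _

theorem legendreDirichletCharacter_ne_one (hp : p ≠ 2) : legendreDirichletCharacter p ≠ 1 :=
  (MulChar.ringHomComp_ne_one_iff (RingHom.injective_int _)).2
    (quadraticChar_ne_one (by rwa [ZMod.ringChar_zmod_n]))

theorem im_gaussSum_legendreDirichletCharacter_pos (hp : p % 4 = 3) :
    0 < (gaussSum (legendreDirichletCharacter p) ZMod.stdAddChar).im := by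
  have stdAddChar_ne_one : (ZMod.stdAddChar : AddChar (ZMod p) ℂ) ≠ 1 := by
    simpa using ZMod.isPrimitive_stdAddChar p one_ne_zero
  have hp2 : ringChar (ZMod p) ≠ 2 := by rw [ZMod.ringChar_zmod_n]; omega
  rw [← sum_addChar_sq_eq_gaussSum_quadraticChar hp2 stdAddChar_ne_one]
  exact im_sum_stdAddChar_sq_pos hp

open scoped ComplexOrder in
theorem sum_quadraticChar_mul_val_neg (hp : p % 4 = 3) :
    ∑ j : ZMod p, quadraticChar (ZMod p) j * (j.val : ℤ) < 0 := by
  have hχ1 := legendreDirichletCharacter_ne_one (p := p) (by omega)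
  have hχ2 := isQuadratic_legendreDirichletCharacter (p := p)
  have formula := im_gaussSum_mul_LFunction_one
    (isPrimitive_of_ne_one_of_prime_level hχ1) hχ2 hχ1
  obtain ⟨L_re_pos, L_im⟩ := Complex.pos_iff.1 (LFunction_one_pos_of_isQuadratic hχ2 hχ1)
  rw [Complex.mul_im, ← L_im, mul_zero, zero_add] at formula
  have := mul_pos (im_gaussSum_legendreDirichletCharacter_pos hp) L_re_pos
  have p_pos : (0 : ℝ) < p := by exact_mod_cast (Fact.out : p.Prime).pos
  rw [formula, neg_mul, neg_pos] at this
  have neg := (pos_iff_neg_of_mul_neg this).1 (div_pos Real.pi_pos p_pos)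
  simp only [MulChar.ringHomComp_apply, eq_intCast, Complex.intCast_re] at neg
  exact_mod_cast neg

theorem sum_Icc_legendreSym_mul_neg (hp : p % 4 = 3) :
    ∑ y ∈ Finset.Icc 1 (p - 1), legendreSym p y * (y : ℤ) < 0 := by
  convert sum_quadraticChar_mul_val_neg hp using 1
  rw [← sum_range_natCast_zmod]
  have Icc_subset : Finset.Icc 1 (p - 1) ⊆ Finset.range p := fun y hy => by
    rw [Finset.mem_range]
    exact Nat.lt_of_le_pred (Fact.out : p.Prime).pos (Finset.mem_Icc.1 hy).2
  refine Finset.sum_subset_zero_on_sdiff Icc_subset (fun y hy => ?_) fun y hy => ?_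
  · obtain rfl : y = 0 := by
      simp only [Finset.mem_sdiff, Finset.mem_range, Finset.mem_Icc] at hy
      omega
    simp
  · rw [legendreSym, Int.cast_natCast, ZMod.val_cast_of_lt (Finset.mem_range.1 (Icc_subset hy))]

theorem exists_sq_intModEq_iff_isSquare {n : ℕ} {y : ℤ} :
    (∃ x : ℤ, x ^ 2 ≡ y [ZMOD n]) ↔ IsSquare (y : ZMod n) := by
  rw [isSquare_iff_exists_sq, ZMod.intCast_surjective.exists]
  simp only [← ZMod.intCast_eq_intCast_iff, Int.cast_pow, eq_comm]

open scoped Classical in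
theorem sum_legendreSym_mul_eq_sub (s : Finset ℤ) (hs : ∀ y ∈ s, (y : ZMod p) ≠ 0) :
    ∑ y ∈ s, legendreSym p y * y =
      ∑ y ∈ s.filter (fun y => ∃ x : ℤ, x ^ 2 ≡ y [ZMOD p]), y -
        ∑ y ∈ s.filter (fun y => ¬ ∃ x : ℤ, x ^ 2 ≡ y [ZMOD p]), y := by
  rw [← Finset.sum_filter_add_sum_filter_not s (fun y => ∃ x : ℤ, x ^ 2 ≡ y [ZMOD p]),
    sub_eq_add_neg, ← Finset.sum_neg_distrib]
  congr 1 <;> refine Finset.sum_congr rfl fun y hy => ?_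
  all_goals
    obtain ⟨hys, hy⟩ := Finset.mem_filter.1 hy
    rw [exists_sq_intModEq_iff_isSquare] at hy
  · rw [(legendreSym.eq_one_iff p (hs y hys)).2 hy, one_mul]
  · rw [(legendreSym.eq_neg_one_iff p).2 hy, neg_one_mul]

end QuadraticCharacterModPrime

universe u

open scoped Classical in
theorem bind_pure_eq_map {α β : Type u} (s : Finset α) (f : α ↪ β) :
    (do let a ← s; pure (f a)) = s.map f := by
  rw [bind_pure_comp, Finset.fmap_def, Finset.map_eq_image]

open scoped Classical in
theorem sum_nonresidues_gt_sum_residues_of_prime_mod_eight_eq_seven_general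
    (p : ℕ) (hp : p.Prime) (hmod : p % 4 = 3) :
    ∑ y ∈ (Finset.Icc 1 (p - 1)).filter
        (fun y => ∃ x : ℤ, x ^ 2 ≡ (y : ℤ) [ZMOD (p : ℤ)]), y <
      ∑ y ∈ (Finset.Icc 1 (p - 1)).filter
        (fun y => ¬ ∃ x : ℤ, x ^ 2 ≡ (y : ℤ) [ZMOD (p : ℤ)]), y := by
  have : Fact p.Prime := ⟨hp⟩
  -- As `y` is an integer, the range of summation elaborates to `[1, p - 1] ⊆ ℕ` cast to `ℤ` through
  -- the `Finset` monad.
  have range_eq : (do let a ← Finset.Icc 1 (p - 1); pure (a : ℤ)) =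
      (Finset.Icc 1 (p - 1)).map Nat.castEmbedding :=
    bind_pure_eq_map _ Nat.castEmbedding
  rw [range_eq, ← sub_neg, ← sum_legendreSym_mul_eq_sub, Finset.sum_map]
  · exact sum_Icc_legendreSym_mul_neg hmod
  · intro y hy
    obtain ⟨a, ha, rfl⟩ := Finset.mem_map.1 hy
    rw [Finset.mem_Icc] at ha
    rw [Nat.castEmbedding_apply, Int.cast_natCast, Ne, ZMod.natCast_eq_zero_iff]
    exact Nat.not_dvd_of_pos_of_lt (by omega) (by omega)

open scoped Classical in
/-- For a prime `p ≡ 7 (mod 8)`, the sum of all non-residues of `p` in `[1, p-1]`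
is strictly greater than the sum of all quadratic residues of `p` in `[1, p-1]`. -/
theorem sum_nonresidues_gt_sum_residues_of_prime_mod_eight_eq_seven
    (p : ℕ) (hp : p.Prime) (hmod : p % 8 = 7) :
    ∑ y ∈ (Finset.Icc 1 (p - 1)).filter
        (fun y => ∃ x : ℤ, x ^ 2 ≡ (y : ℤ) [ZMOD (p : ℤ)]), y <
      ∑ y ∈ (Finset.Icc 1 (p - 1)).filter
        (fun y => ¬ ∃ x : ℤ, x ^ 2 ≡ (y : ℤ) [ZMOD (p : ℤ)]), y := by
  exact sum_nonresidues_gt_sum_residues_of_prime_mod_eight_eq_seven_general p hp (by omega)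
end
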